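/- arXiv:1403.1922 — 4 statements merged into one kernel-verified Lean document; each statement's English description precedes it below -/
import Mathlib

section
/- Let Ṽ ∈ O(m,r), Y ∈ ℝ^{n×m}, X ∈ ℝ^{n×p}, and let ρ(T;λ) = Σ_{j=1}^p φ(‖T_{j*}‖_2; λ) be a penalty where φ(·;λ) is nondecreasing in its first argument. If Â minimizes T ↦ ‖YṼṼ' − XT‖_F²/2 + ρ(T;λ) over T ∈ ℝ^{p×m}, then ÂṼṼ' is also a minimizer and achieves the same objective value; in particular there exists a minimizer Â satisfying ÂṼṼ' = Â. -/
open MeasureTheory ProbabilityTheory Matrix Set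
open scoped ENNReal NNReal

noncomputable section

/-- Euclidean (ℓ₂) norm of a finitely indexed real vector. -/
def l2norm {I : Type*} [Fintype I] (v : I → ℝ) : ℝ := Real.sqrt (∑ i, v i ^ 2)

/-- Frobenius norm of a real matrix. -/
def frobNorm {I J : Type*} [Fintype I] [Fintype J] (M : Matrix I J ℝ) : ℝ :=
  Real.sqrt (∑ i, ∑ j, M i j ^ 2)

/-- ℓ₂/ℓ₁ norm: the sum of the ℓ₂ norms of the rows. -/
def norm21 {I J : Type*} [Fintype I] [Fintype J] (M : Matrix I J ℝ) : ℝ :=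
  ∑ i, l2norm (M i)

open Classical in
/-- Row support: indices of nonzero rows. -/
def rowSupport {I J : Type*} [Fintype I] [Fintype J] (M : Matrix I J ℝ) : Finset I :=
  Finset.univ.filter (fun i => M i ≠ 0)

/-- The j-th largest singular value (j ≥ 1), via the Courant–Fischer max–min
characterization: `σ_j(M) = max_{dim V = j} min_{v ∈ V, ‖v‖=1} ‖Mv‖`. -/
def singularValue {I J : Type*} [Fintype I] [Fintype J] (M : Matrix I J ℝ) (j : ℕ) : ℝ :=
  sSup { t | ∃ V : Submodule ℝ (J → ℝ), Module.finrank ℝ V = j ∧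
    t = sInf { u | ∃ v ∈ V, l2norm v = 1 ∧ u = l2norm (M.mulVec v) } }

/-- Operator norm (largest singular value). -/
def opNorm {I J : Type*} [Fintype I] [Fintype J] (M : Matrix I J ℝ) : ℝ :=
  sSup { t | ∃ v : J → ℝ, l2norm v = 1 ∧ t = l2norm (M.mulVec v) }

/-- Schatten-q norm. -/
def schattenNorm {I J : Type*} [Fintype I] [Fintype J] (M : Matrix I J ℝ) (q : ℝ) : ℝ :=
  (∑ i ∈ Finset.Icc 1 (min (Fintype.card I) (Fintype.card J)), singularValue M i ^ q) ^ (1 / q)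

/-- Squared lower k-sparse Riesz constant `κ₋²(k)`:
the minimum over column subsets B with |B| = k of the smallest eigenvalue of X_B' X_B. -/
def kappaMinusSq {n p : ℕ} (X : Matrix (Fin n) (Fin p) ℝ) (k : ℕ) : ℝ :=
  sInf { t | ∃ B : Finset (Fin p), B.card = k ∧ ∃ v : Fin p → ℝ,
    (∀ i, i ∉ B → v i = 0) ∧ l2norm v = 1 ∧ t = l2norm (X.mulVec v) ^ 2 }

/-- Squared upper k-sparse Riesz constant `κ₊²(k)`. -/
def kappaPlusSq {n p : ℕ} (X : Matrix (Fin n) (Fin p) ℝ) (k : ℕ) : ℝ :=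
  sSup { t | ∃ B : Finset (Fin p), B.card = k ∧ ∃ v : Fin p → ℝ,
    (∀ i, i ∉ B → v i = 0) ∧ l2norm v = 1 ∧ t = l2norm (X.mulVec v) ^ 2 }

def kappaMinus {n p : ℕ} (X : Matrix (Fin n) (Fin p) ℝ) (k : ℕ) : ℝ :=
  Real.sqrt (kappaMinusSq X k)

def kappaPlus {n p : ℕ} (X : Matrix (Fin n) (Fin p) ℝ) (k : ℕ) : ℝ :=
  Real.sqrt (kappaPlusSq X k)

/-- Membership in the parameter space Θ(s, r, d, γ): rank r, all nonzero singular values in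
(d, γd], and at most s nonzero rows. (Singular values are automatically nonincreasing.) -/
def memTheta {p m : ℕ} (A : Matrix (Fin p) (Fin m) ℝ) (s r : ℕ) (d γ : ℝ) : Prop :=
  A.rank = r ∧ 0 < d ∧ singularValue A 1 ≤ γ * d ∧ d < singularValue A r ∧
    (rowSupport A).card ≤ s

/-- `V` is a matrix of top-r right singular vectors of `M`: the columns of `V` are orthonormal
eigenvectors of `MᵀM`, the j-th column with eigenvalue `σ_j(M)²`. -/
def IsRightSingularVectors {I J : Type*} [Fintype I] [Fintype J] {r : ℕ}
    (M : Matrix I J ℝ) (V : Matrix J (Fin r) ℝ) : Prop :=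
  Vᵀ * V = 1 ∧ ∀ j : Fin r,
    (Mᵀ * M).mulVec (fun i => V i j) = (singularValue M (j.1 + 1)) ^ 2 • (fun i => V i j)

/-- `U` is a matrix of top-r left singular vectors of `M`. -/
def IsLeftSingularVectors {I J : Type*} [Fintype I] [Fintype J] {r : ℕ}
    (M : Matrix I J ℝ) (U : Matrix I (Fin r) ℝ) : Prop :=
  IsRightSingularVectors Mᵀ U

instance matrixMeasurableSpace {n m : ℕ} : MeasurableSpace (Matrix (Fin n) (Fin m) ℝ) :=
  (inferInstance : MeasurableSpace (Fin n → Fin m → ℝ))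

/-- Law of an n×m random matrix with i.i.d. N(0, v) entries. -/
def gaussianMatrix (n m : ℕ) (v : ℝ≥0) : Measure (Matrix (Fin n) (Fin m) ℝ) :=
  Measure.pi fun _ : Fin n => Measure.pi fun _ : Fin m => gaussianReal 0 v

open Classical in
/-- Kullback–Leibler divergence D(P‖Q). -/
def klDivM {Ω : Type*} [MeasurableSpace Ω] (P Q : Measure Ω) : ℝ≥0∞ :=
  if P ≪ Q ∧ Integrable (fun x => Real.log (P.rnDeriv Q x).toReal) P
  then ENNReal.ofReal (∫ x, Real.log (P.rnDeriv Q x).toReal ∂P)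
  else ∞

/-- ε-packing number of T with respect to the distance ρ: the maximal cardinality of a subset
of T whose pairwise ρ-distances are all at least ε. -/
def packingNumber {α : Type*} (T : Set α) (ρ : α → α → ℝ) (ε : ℝ) : ℕ :=
  sSup { k | ∃ S : Finset α, ↑S ⊆ T ∧ (∀ x ∈ S, ∀ y ∈ S, x ≠ y → ε ≤ ρ x y) ∧ S.card = k }

/-- Moore–Penrose pseudoinverse (characterized by the four Penrose equations). -/
def IsMoorePenrose {k : ℕ} (M Mi : Matrix (Fin k) (Fin k) ℝ) : Prop :=
  M * Mi * M = M ∧ Mi * M * Mi = Mi ∧ (M * Mi)ᵀ = M * Mi ∧ (Mi * M)ᵀ = Mi * M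

/-- Right multiplication by the projection `V Vᵀ` does not increase row sums of squares. -/
theorem row_proj_le {k m r : ℕ} (M : Matrix (Fin k) (Fin m) ℝ)
    (V : Matrix (Fin m) (Fin r) ℝ) (hV : Vᵀ * V = 1) (i : Fin k) :
    ∑ j, (M * V * Vᵀ) i j ^ 2 ≤ ∑ j, M i j ^ 2 := by
  have h1 : ∀ N : Matrix (Fin k) (Fin m) ℝ, ∑ j, N i j ^ 2 = (N * Nᵀ) i i := by
    intro N
    simp [Matrix.mul_apply, sq]
  have hP : V * (Vᵀ * (V * (Vᵀ * Mᵀ))) = V * (Vᵀ * Mᵀ) := by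
    rw [← Matrix.mul_assoc Vᵀ V, hV, Matrix.one_mul]
  have h2 : M * V * Vᵀ * (M * V * Vᵀ)ᵀ = M * (V * (Vᵀ * Mᵀ)) := by
    simp only [Matrix.transpose_mul, Matrix.transpose_transpose, Matrix.mul_assoc, hP]
  have h3 : (M - M * V * Vᵀ) * (M - M * V * Vᵀ)ᵀ = M * Mᵀ - M * (V * (Vᵀ * Mᵀ)) := by
    simp only [Matrix.transpose_sub, Matrix.sub_mul, Matrix.mul_sub, Matrix.transpose_mul,
      Matrix.transpose_transpose, Matrix.mul_assoc, hP]
    abel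
  have h4 : 0 ≤ ∑ j, (M - M * V * Vᵀ) i j ^ 2 := Finset.sum_nonneg fun _ _ => sq_nonneg _
  rw [h1, h3, Matrix.sub_apply] at h4
  rw [h1, h1, h2]
  linarith

/-- If `Â` minimizes `T ↦ ‖YṼṼ' − XT‖_F²/2 + ρ(T;λ)` where the penalty
`ρ(T;λ) = Σ_j φ(‖T_{j*}‖₂)` has `φ` nondecreasing, then `ÂṼṼ'` is also a minimizer and attains
the same objective value; in particular there is a minimizer `A'` with `A'ṼṼ' = A'`. -/
theorem stmt0 {n m p r : ℕ} (Y : Matrix (Fin n) (Fin m) ℝ) (X : Matrix (Fin n) (Fin p) ℝ)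
    (Vt : Matrix (Fin m) (Fin r) ℝ) (hVt : Vtᵀ * Vt = 1)
    (φ : ℝ → ℝ) (hφ : Monotone φ)
    (Ahat : Matrix (Fin p) (Fin m) ℝ)
    (hmin : ∀ T : Matrix (Fin p) (Fin m) ℝ,
      frobNorm (Y * Vt * Vtᵀ - X * Ahat) ^ 2 / 2 + ∑ j, φ (l2norm (Ahat j)) ≤
        frobNorm (Y * Vt * Vtᵀ - X * T) ^ 2 / 2 + ∑ j, φ (l2norm (T j))) :
    (∀ T : Matrix (Fin p) (Fin m) ℝ,
      frobNorm (Y * Vt * Vtᵀ - X * (Ahat * Vt * Vtᵀ)) ^ 2 / 2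
          + ∑ j, φ (l2norm ((Ahat * Vt * Vtᵀ) j)) ≤
        frobNorm (Y * Vt * Vtᵀ - X * T) ^ 2 / 2 + ∑ j, φ (l2norm (T j))) ∧
    (frobNorm (Y * Vt * Vtᵀ - X * (Ahat * Vt * Vtᵀ)) ^ 2 / 2
          + ∑ j, φ (l2norm ((Ahat * Vt * Vtᵀ) j)) =
        frobNorm (Y * Vt * Vtᵀ - X * Ahat) ^ 2 / 2 + ∑ j, φ (l2norm (Ahat j))) ∧
    (∃ A' : Matrix (Fin p) (Fin m) ℝ, A' * Vt * Vtᵀ = A' ∧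
      ∀ T : Matrix (Fin p) (Fin m) ℝ,
        frobNorm (Y * Vt * Vtᵀ - X * A') ^ 2 / 2 + ∑ j, φ (l2norm (A' j)) ≤
          frobNorm (Y * Vt * Vtᵀ - X * T) ^ 2 / 2 + ∑ j, φ (l2norm (T j))) := by
  have hPP : Ahat * Vt * Vtᵀ * Vt * Vtᵀ = Ahat * Vt * Vtᵀ := by
    rw [Matrix.mul_assoc (Ahat * Vt) Vtᵀ Vt, hVt, Matrix.mul_one]
  have hE : Y * Vt * Vtᵀ - X * (Ahat * Vt * Vtᵀ) = (Y * Vt * Vtᵀ - X * Ahat) * Vt * Vtᵀ := by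
    rw [Matrix.sub_mul, Matrix.sub_mul, Matrix.mul_assoc (Y * Vt) Vtᵀ Vt, hVt, Matrix.mul_one]
    simp only [Matrix.mul_assoc]
  have hF : frobNorm (Y * Vt * Vtᵀ - X * (Ahat * Vt * Vtᵀ)) ^ 2 ≤
      frobNorm (Y * Vt * Vtᵀ - X * Ahat) ^ 2 := by
    rw [hE]
    refine pow_le_pow_left₀ (Real.sqrt_nonneg _) (Real.sqrt_le_sqrt ?_) 2
    exact Finset.sum_le_sum fun i _ => row_proj_le _ Vt hVt i
  have hR : ∑ j, φ (l2norm ((Ahat * Vt * Vtᵀ) j)) ≤ ∑ j, φ (l2norm (Ahat j)) :=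
    Finset.sum_le_sum fun j _ => hφ (Real.sqrt_le_sqrt (row_proj_le Ahat Vt hVt j))
  have hA : frobNorm (Y * Vt * Vtᵀ - X * (Ahat * Vt * Vtᵀ)) ^ 2 / 2
          + ∑ j, φ (l2norm ((Ahat * Vt * Vtᵀ) j)) ≤
        frobNorm (Y * Vt * Vtᵀ - X * Ahat) ^ 2 / 2 + ∑ j, φ (l2norm (Ahat j)) := by
    linarith
  exact ⟨fun T => hA.trans (hmin T), le_antisymm hA (hmin _),
    Ahat * Vt * Vtᵀ, hPP, fun T => hA.trans (hmin T)⟩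

end
end

section
/- Let Ṽ ∈ O(m,r), Y ∈ ℝ^{n×m}, X ∈ ℝ^{n×p}, and let ρ(T;λ) = Σ_{j=1}^p φ(‖T_{j*}‖_2; λ) with φ(·;λ) nondecreasing in its first argument. If B̃ minimizes B ↦ ‖YṼ − XB‖_F²/2 + ρ(B;λ) over B ∈ ℝ^{p×r}, then Â = B̃Ṽ' minimizes T ↦ ‖YṼṼ' − XT‖_F²/2 + ρ(T;λ) over T ∈ ℝ^{p×m}. -/
open MeasureTheory ProbabilityTheory Matrix Set
open scoped ENNReal NNReal

noncomputable section

theorem aux_iso {m r : ℕ} (V : Matrix (Fin m) (Fin r) ℝ) (hV : Vᵀ * V = 1) (w : Fin r → ℝ) :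
    (V *ᵥ w) ⬝ᵥ (V *ᵥ w) = w ⬝ᵥ w := by
  rw [Matrix.dotProduct_mulVec, Matrix.vecMul_mulVec, hV, Matrix.vecMul_one]

theorem aux_bessel {m r : ℕ} (V : Matrix (Fin m) (Fin r) ℝ) (hV : Vᵀ * V = 1) (t : Fin m → ℝ) :
    (Vᵀ *ᵥ t) ⬝ᵥ (Vᵀ *ᵥ t) ≤ t ⬝ᵥ t := by
  have h1 := aux_iso V hV (Vᵀ *ᵥ t)
  have h2 : t ⬝ᵥ (V *ᵥ (Vᵀ *ᵥ t)) = (Vᵀ *ᵥ t) ⬝ᵥ (Vᵀ *ᵥ t) := by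
    rw [Matrix.dotProduct_mulVec, Matrix.mulVec_transpose]
  have h3 : 0 ≤ (t - V *ᵥ (Vᵀ *ᵥ t)) ⬝ᵥ (t - V *ᵥ (Vᵀ *ᵥ t)) :=
    Finset.sum_nonneg fun i _ => mul_self_nonneg _
  rw [sub_dotProduct, dotProduct_sub, dotProduct_sub, h1, h2,
    dotProduct_comm (V *ᵥ (Vᵀ *ᵥ t)) t, h2] at h3
  linarith

theorem aux_l2 {I : Type*} [Fintype I] (v : I → ℝ) : l2norm v = Real.sqrt (v ⬝ᵥ v) := by
  simp only [l2norm, dotProduct, sq]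

theorem aux_frob {I J : Type*} [Fintype I] [Fintype J] (M : Matrix I J ℝ) :
    frobNorm M ^ 2 = ∑ i, l2norm (M i) ^ 2 := by
  have h : ∀ i, 0 ≤ ∑ j, M i j ^ 2 := fun i => Finset.sum_nonneg fun j _ => sq_nonneg _
  unfold frobNorm l2norm
  rw [Real.sq_sqrt (Finset.sum_nonneg fun i _ => h i)]
  exact Finset.sum_congr rfl fun i _ => (Real.sq_sqrt (h i)).symm

theorem aux_row_eq {k m r : ℕ} (V : Matrix (Fin m) (Fin r) ℝ) (hV : Vᵀ * V = 1)
    (B : Matrix (Fin k) (Fin r) ℝ) (j : Fin k) : l2norm ((B * Vᵀ) j) = l2norm (B j) := by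
  have h : (B * Vᵀ) j = V *ᵥ (B j) := by
    ext i
    simp [Matrix.mul_apply, Matrix.mulVec, dotProduct, mul_comm]
  rw [h, aux_l2, aux_l2, aux_iso V hV]

theorem aux_row_le {k m r : ℕ} (V : Matrix (Fin m) (Fin r) ℝ) (hV : Vᵀ * V = 1)
    (T : Matrix (Fin k) (Fin m) ℝ) (j : Fin k) : l2norm ((T * V) j) ≤ l2norm (T j) := by
  have h : (T * V) j = Vᵀ *ᵥ (T j) := by
    ext i
    simp [Matrix.mul_apply, Matrix.mulVec, dotProduct, mul_comm]
  rw [h, aux_l2, aux_l2]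
  exact Real.sqrt_le_sqrt (aux_bessel V hV _)

/-- If `B̃` minimizes `B ↦ ‖YṼ − XB‖_F²/2 + ρ(B;λ)` over p×r matrices, where
`ρ(B;λ) = Σ_j φ(‖B_{j*}‖₂)` with `φ` nondecreasing, then `Â = B̃Ṽ'` minimizes
`T ↦ ‖YṼṼ' − XT‖_F²/2 + ρ(T;λ)` over p×m matrices. -/
theorem stmt1 {n m p r : ℕ} (Y : Matrix (Fin n) (Fin m) ℝ) (X : Matrix (Fin n) (Fin p) ℝ)
    (Vt : Matrix (Fin m) (Fin r) ℝ) (hVt : Vtᵀ * Vt = 1)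
    (φ : ℝ → ℝ) (hφ : Monotone φ)
    (Bt : Matrix (Fin p) (Fin r) ℝ)
    (hmin : ∀ B : Matrix (Fin p) (Fin r) ℝ,
      frobNorm (Y * Vt - X * Bt) ^ 2 / 2 + ∑ j, φ (l2norm (Bt j)) ≤
        frobNorm (Y * Vt - X * B) ^ 2 / 2 + ∑ j, φ (l2norm (B j))) :
    ∀ T : Matrix (Fin p) (Fin m) ℝ,
      frobNorm (Y * Vt * Vtᵀ - X * (Bt * Vtᵀ)) ^ 2 / 2 + ∑ j, φ (l2norm ((Bt * Vtᵀ) j)) ≤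
        frobNorm (Y * Vt * Vtᵀ - X * T) ^ 2 / 2 + ∑ j, φ (l2norm (T j)) := by
  intro T
  have e1 : Y * Vt * Vtᵀ - X * (Bt * Vtᵀ) = (Y * Vt - X * Bt) * Vtᵀ := by
    rw [Matrix.sub_mul, Matrix.mul_assoc X]
  have e2 : Y * Vt - X * (T * Vt) = (Y * Vt * Vtᵀ - X * T) * Vt := by
    rw [Matrix.sub_mul, Matrix.mul_assoc (Y * Vt), hVt, Matrix.mul_one, Matrix.mul_assoc X]
  have h := hmin (T * Vt)
  have h1 : frobNorm ((Y * Vt - X * Bt) * Vtᵀ) ^ 2 = frobNorm (Y * Vt - X * Bt) ^ 2 := by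
    rw [aux_frob, aux_frob]
    simp only [aux_row_eq Vt hVt]
  have h2 : frobNorm ((Y * Vt * Vtᵀ - X * T) * Vt) ^ 2 ≤ frobNorm (Y * Vt * Vtᵀ - X * T) ^ 2 := by
    rw [aux_frob, aux_frob]
    exact Finset.sum_le_sum fun i _ =>
      pow_le_pow_left₀ (Real.sqrt_nonneg _) (aux_row_le Vt hVt _ i) 2
  have h3 : ∑ j, φ (l2norm ((T * Vt) j)) ≤ ∑ j, φ (l2norm (T j)) :=
    Finset.sum_le_sum fun j _ => hφ (aux_row_le Vt hVt T j)
  rw [e2] at h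
  rw [e1, h1]
  simp only [aux_row_eq Vt hVt]
  linarith

end
end

section
/- (Group Lasso error bound, deterministic part.) Consider W = XB + Z with W ∈ ℝ^{n×r}, X ∈ ℝ^{n×p}, B ∈ ℝ^{p×r} having at most s nonzero rows (s ≥ 1), and Z ∈ ℝ^{n×r}. Let B̂ minimize ‖W − XB‖_F²/2 + λ‖B‖_{2,1} over ℝ^{p×r} for a given λ > 0. Suppose Condition SE(s_*, c_*, K) holds with an absolute constant K > 1 and positive constants s_*, c_* satisfying s_* ≥ 2s and 6c_* ≤ √(s_*/s − 1). If 2‖X_{*j}'(W − XB)‖_F ≤ λ for all j ∈ {1,…,p}, then ‖B̂ − B‖_F ≤ 3(1 + (4c_*)^{-1})√s λ / κ_-²(s_*). -/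
open MeasureTheory ProbabilityTheory Matrix Set
open scoped ENNReal NNReal

noncomputable section

namespace GrpLasso

lemma l2_nonneg {I : Type*} [Fintype I] (v : I → ℝ) : 0 ≤ l2norm v := Real.sqrt_nonneg _

lemma l2_sq {I : Type*} [Fintype I] (v : I → ℝ) : l2norm v ^ 2 = ∑ i, v i ^ 2 :=
  Real.sq_sqrt (Finset.sum_nonneg fun _ _ => sq_nonneg _)

lemma l2_eq_norm {I : Type*} [Fintype I] (v : I → ℝ) : l2norm v = ‖WithLp.toLp 2 v‖ := by
  simp [l2norm, EuclideanSpace.norm_eq]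

lemma l2_add {I : Type*} [Fintype I] (u v : I → ℝ) : l2norm (u + v) ≤ l2norm u + l2norm v := by
  simp only [l2_eq_norm, WithLp.toLp_add]
  exact norm_add_le _ _

lemma l2_smul {I : Type*} [Fintype I] (c : ℝ) (v : I → ℝ) : l2norm (c • v) = |c| * l2norm v := by
  simp only [l2_eq_norm, WithLp.toLp_smul, norm_smul, Real.norm_eq_abs]

lemma cs {I : Type*} [Fintype I] (u v : I → ℝ) : ∑ i, u i * v i ≤ l2norm u * l2norm v :=
  Real.sum_mul_le_sqrt_mul_sqrt _ _ _

/-- Frobenius inner product. -/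
def ip {I J : Type*} [Fintype I] [Fintype J] (M N : Matrix I J ℝ) : ℝ := ∑ i, ∑ j, M i j * N i j

section ipl
variable {I J : Type*} [Fintype I] [Fintype J]

lemma ip_comm (M N : Matrix I J ℝ) : ip M N = ip N M := by simp [ip, mul_comm]

lemma ip_add (M N P : Matrix I J ℝ) : ip M (N + P) = ip M N + ip M P := by
  simp [ip, mul_add, Finset.sum_add_distrib]

lemma ip_smul (c : ℝ) (M N : Matrix I J ℝ) : ip M (c • N) = c * ip M N := by
  simp [ip, Finset.mul_sum, mul_left_comm]

lemma add_ip (M N P : Matrix I J ℝ) : ip (N + P) M = ip N M + ip P M := by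
  simp [ip, add_mul, Finset.sum_add_distrib]

lemma smul_ip (c : ℝ) (M N : Matrix I J ℝ) : ip (c • N) M = c * ip N M := by
  rw [ip_comm, ip_smul, ip_comm]

lemma sub_ip (M N P : Matrix I J ℝ) : ip (N - P) M = ip N M - ip P M := by
  simp [ip, sub_mul, Finset.sum_sub_distrib]

lemma frob_sq (M : Matrix I J ℝ) : frobNorm M ^ 2 = ip M M := by
  rw [frobNorm, Real.sq_sqrt]
  · simp [ip, sq]
  · exact Finset.sum_nonneg fun _ _ => Finset.sum_nonneg fun _ _ => sq_nonneg _

lemma ip_self_nonneg (M : Matrix I J ℝ) : 0 ≤ ip M M := by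
  rw [← frob_sq]; positivity

lemma ip_self_rows (M : Matrix I J ℝ) : ip M M = ∑ i, l2norm (M i) ^ 2 := by
  simp only [ip, l2_sq]
  simp only [sq]

lemma ip_self_cols (M : Matrix I J ℝ) : ip M M = ∑ j, l2norm (fun i => M i j) ^ 2 := by
  simp only [ip, l2_sq]
  simp only [sq]
  rw [Finset.sum_comm]

lemma ip_le_rows (M N : Matrix I J ℝ) : ip M N ≤ ∑ i, l2norm (M i) * l2norm (N i) :=
  Finset.sum_le_sum fun i _ => cs (M i) (N i)
end ipl

lemma ip_adj {n p r : ℕ} (X : Matrix (Fin n) (Fin p) ℝ) (E : Matrix (Fin n) (Fin r) ℝ)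
    (V : Matrix (Fin p) (Fin r) ℝ) : ip E (X * V) = ip (Xᵀ * E) V := by
  simp only [ip, Matrix.mul_apply, Finset.mul_sum, Finset.sum_mul, Matrix.transpose_apply]
  calc _ = ∑ i, ∑ k, ∑ j, E i j * (X i k * V k j) :=
        Finset.sum_congr rfl fun i _ => Finset.sum_comm
    _ = ∑ k, ∑ i, ∑ j, E i j * (X i k * V k j) := Finset.sum_comm
    _ = ∑ k, ∑ j, ∑ i, E i j * (X i k * V k j) :=
        Finset.sum_congr rfl fun i _ => Finset.sum_comm
    _ = _ := by
        refine Finset.sum_congr rfl fun _ _ => Finset.sum_congr rfl fun _ _ =>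
          Finset.sum_congr rfl fun _ _ => by ring

/-- Row restriction. -/
def res {p r : ℕ} (D : Matrix (Fin p) (Fin r) ℝ) (T : Finset (Fin p)) :
    Matrix (Fin p) (Fin r) ℝ := fun i => if i ∈ T then D i else 0

lemma res_row {p r : ℕ} (D : Matrix (Fin p) (Fin r) ℝ) (T : Finset (Fin p)) (i : Fin p) :
    l2norm (res D T i) = if i ∈ T then l2norm (D i) else 0 := by
  unfold res
  split_ifs <;> simp [l2norm]

lemma res_sq {p r : ℕ} (D : Matrix (Fin p) (Fin r) ℝ) (T : Finset (Fin p)) :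
    ip (res D T) (res D T) = ∑ i ∈ T, l2norm (D i) ^ 2 := by
  rw [ip_self_rows]
  simp [res_row]

lemma res_union {p r : ℕ} (D : Matrix (Fin p) (Fin r) ℝ) (S T : Finset (Fin p))
    (h : Disjoint S T) : res D (S ∪ T) = res D S + res D T := by
  ext i j
  have := fun hi : i ∈ S => Finset.disjoint_left.1 h hi
  by_cases hS : i ∈ S <;> by_cases hT : i ∈ T <;> simp_all [res]

lemma res_univ {p r : ℕ} (D : Matrix (Fin p) (Fin r) ℝ) : res D Finset.univ = D := by
  ext i j; simp [res]

/-! sparse eigenvalues -/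

lemma mulVec_bd {n p : ℕ} (X : Matrix (Fin n) (Fin p) ℝ) (v : Fin p → ℝ) :
    l2norm (X.mulVec v) ^ 2 ≤ (∑ i, l2norm (X i) ^ 2) * l2norm v ^ 2 := by
  rw [l2_sq, Finset.sum_mul]
  refine Finset.sum_le_sum fun i _ => ?_
  rw [l2_sq, l2_sq]
  exact Finset.sum_mul_sq_le_sq_mul_sq Finset.univ (X i) v

lemma kminus_vec {n p : ℕ} (X : Matrix (Fin n) (Fin p) ℝ) (k : ℕ) (A : Finset (Fin p))
    (hA : A.card ≤ k) (v : Fin p → ℝ) (hv : ∀ i, i ∉ A → v i = 0) :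
    kappaMinusSq X k * l2norm v ^ 2 ≤ l2norm (X.mulVec v) ^ 2 := by
  by_cases hk : k ≤ p
  swap
  · have : kappaMinusSq X k = 0 := by
      unfold kappaMinusSq
      convert Real.sInf_empty
      ext t
      simp only [mem_ofPred_eq, mem_empty_iff_false, iff_false]
      rintro ⟨B, hB, -⟩
      have := B.card_le_univ
      simp at this
      omega
    rw [this]; simp; positivity
  rcases (l2_nonneg v).eq_or_lt with h0 | h0
  · rw [← h0]; simp; positivity
  obtain ⟨A', hAA, hA'⟩ := Finset.exists_superset_card_eq hA (by simpa using hk)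
  have : kappaMinusSq X k ≤ l2norm (X.mulVec ((l2norm v)⁻¹ • v)) ^ 2 := by
    apply csInf_le
    · exact ⟨0, by rintro t ⟨_, _, _, _, _, rfl⟩; positivity⟩
    · refine ⟨A', hA', _, ?_, ?_, rfl⟩
      · intro i hi
        simp [hv i (fun h => hi (hAA h))]
      · rw [l2_smul, abs_of_pos (by positivity)]
        field_simp
  rw [Matrix.mulVec_smul, l2_smul, abs_of_pos (by positivity), mul_pow, inv_pow] at this
  field_simp at this
  linarith

lemma kplus_vec {n p : ℕ} (X : Matrix (Fin n) (Fin p) ℝ) (k : ℕ) (hk : k ≤ p) (A : Finset (Fin p))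
    (hA : A.card ≤ k) (v : Fin p → ℝ) (hv : ∀ i, i ∉ A → v i = 0) :
    l2norm (X.mulVec v) ^ 2 ≤ kappaPlusSq X k * l2norm v ^ 2 := by
  rcases (l2_nonneg v).eq_or_lt with h0 | h0
  · have := mulVec_bd X v
    rw [← h0] at this ⊢
    simpa using this
  obtain ⟨A', hAA, hA'⟩ := Finset.exists_superset_card_eq hA (by simpa using hk)
  have : l2norm (X.mulVec ((l2norm v)⁻¹ • v)) ^ 2 ≤ kappaPlusSq X k := by
    apply le_csSup
    · refine ⟨∑ i, l2norm (X i) ^ 2, ?_⟩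
      rintro t ⟨_, _, w, _, hw, rfl⟩
      have := mulVec_bd X w
      rw [hw] at this
      simpa using this
    · refine ⟨A', hA', _, ?_, ?_, rfl⟩
      · intro i hi
        simp [hv i (fun h => hi (hAA h))]
      · rw [l2_smul, abs_of_pos (by positivity)]
        field_simp
  rw [Matrix.mulVec_smul, l2_smul, abs_of_pos (by positivity), mul_pow, inv_pow] at this
  field_simp at this
  linarith

lemma kminus_mat {n p r : ℕ} (X : Matrix (Fin n) (Fin p) ℝ) (k : ℕ) (A : Finset (Fin p))
    (hA : A.card ≤ k) (V : Matrix (Fin p) (Fin r) ℝ) (hv : ∀ i, i ∉ A → V i = 0) :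
    kappaMinusSq X k * ip V V ≤ ip (X * V) (X * V) := by
  rw [ip_self_cols, ip_self_cols, Finset.mul_sum]
  exact Finset.sum_le_sum fun j _ => kminus_vec X k A hA (fun i => V i j)
    (fun i hi => by simp [hv i hi])

lemma kplus_mat {n p r : ℕ} (X : Matrix (Fin n) (Fin p) ℝ) (k : ℕ) (hk : k ≤ p)
    (A : Finset (Fin p))
    (hA : A.card ≤ k) (V : Matrix (Fin p) (Fin r) ℝ) (hv : ∀ i, i ∉ A → V i = 0) :
    ip (X * V) (X * V) ≤ kappaPlusSq X k * ip V V := by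
  rw [ip_self_cols, ip_self_cols, Finset.mul_sum]
  exact Finset.sum_le_sum fun j _ => kplus_vec X k hk A hA (fun i => V i j)
    (fun i hi => by simp [hv i hi])

lemma cross {n p r : ℕ} (X : Matrix (Fin n) (Fin p) ℝ) (k : ℕ) (hk : k ≤ p) (C : ℝ) (hC : 0 ≤ C)
    (hCk : kappaPlusSq X k - kappaMinusSq X (2 * k) ≤ C)
    (D : Matrix (Fin p) (Fin r) ℝ) (S T : Finset (Fin p)) (hST : Disjoint S T)
    (hS : S.card ≤ k) (hT : T.card ≤ k) :
    |ip (X * res D S) (X * res D T)| ≤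
      C * (Real.sqrt (∑ i ∈ S, l2norm (D i) ^ 2) * Real.sqrt (∑ i ∈ T, l2norm (D i) ^ 2)) := by
  have hz : ip (res D S) (res D T) = 0 := by
    unfold ip
    refine Finset.sum_eq_zero fun i _ => Finset.sum_eq_zero fun j _ => ?_
    have := fun hi : i ∈ S => Finset.disjoint_left.1 hST hi
    by_cases hS : i ∈ S <;> by_cases hT : i ∈ T <;> simp_all [res]
  have hu := kplus_mat X k hk S hS (res D S) (fun i hi => by simp [res, hi])
  have hv := kplus_mat X k hk T hT (res D T) (fun i hi => by simp [res, hi])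
  have hq : ∀ t : ℝ, kappaMinusSq X (2 * k) * (ip (res D S) (res D S)
      + t ^ 2 * ip (res D T) (res D T)) ≤ ip (X * res D S) (X * res D S) +
      2 * t * ip (X * res D S) (X * res D T) + t ^ 2 * ip (X * res D T) (X * res D T) := by
    intro t
    have := kminus_mat X (2 * k) (S ∪ T) (by
      have := Finset.card_union_le S T
      omega) (res D S + t • res D T) (fun i hi => by
        simp only [Finset.mem_union, not_or] at hi
        ext j
        simp [res, hi])
    rw [Matrix.mul_add, Matrix.mul_smul] at this
    simp only [ip_add, add_ip, ip_smul, smul_ip] at this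
    rw [ip_comm (res D T) (res D S), hz, ip_comm (X * res D T) (X * res D S)] at this
    linarith
  rw [res_sq] at hu hv
  rw [res_sq, res_sq] at hq
  set u := ∑ i ∈ S, l2norm (D i) ^ 2
  set v := ∑ i ∈ T, l2norm (D i) ^ 2
  have hu0 : 0 ≤ u := Finset.sum_nonneg fun _ _ => sq_nonneg _
  have hv0 : 0 ≤ v := Finset.sum_nonneg fun _ _ => sq_nonneg _
  set w := ip (X * res D S) (X * res D T)
  have hd : discrim (C * v) (2 * w) (C * u) ≤ 0 := by
    apply discrim_le_zero
    intro t
    have h1 := hq t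
    have h2 := mul_le_mul_of_nonneg_left hv (sq_nonneg t)
    have h3 := mul_le_mul_of_nonneg_right hCk (show 0 ≤ u + t ^ 2 * v by positivity)
    nlinarith
  unfold discrim at hd
  apply abs_le_of_sq_le_sq _ (by positivity)
  rw [mul_pow, mul_pow, Real.sq_sqrt hu0, Real.sq_sqrt hv0]
  linarith

/-! sorting -/
lemma topk {ι : Type*} [DecidableEq ι] (a : ι → ℝ) (ha : ∀ i, 0 ≤ a i) (U : Finset ι) (k : ℕ)
    (hk : k ≤ U.card) :
    ∃ A ⊆ U, A.card = k ∧ ∃ m : ℝ, 0 ≤ m ∧ (∀ i ∈ A, m ≤ a i) ∧ ∀ i ∈ U \ A, a i ≤ m := by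
  induction k with
  | zero =>
    refine ⟨∅, by simp, by simp, ∑ i ∈ U, a i, Finset.sum_nonneg fun i _ => ha i, by simp, ?_⟩
    intro i hi
    exact Finset.single_le_sum (fun i _ => ha i) (by simpa using hi)
  | succ k ih =>
    obtain ⟨A, hAU, hA, m, hm, h1, h2⟩ := ih (by omega)
    have hne : (U \ A).Nonempty := by
      rw [← Finset.card_pos, Finset.card_sdiff_of_subset hAU]; omega
    obtain ⟨j, hj, hmax⟩ := Finset.exists_max_image (U \ A) a hne
    have hj' := Finset.mem_sdiff.1 hj
    refine ⟨insert j A, Finset.insert_subset hj'.1 hAU, ?_, a j, ha j, ?_, ?_⟩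
    · rw [Finset.card_insert_of_notMem hj'.2, hA]
    · intro i hi
      rcases Finset.mem_insert.1 hi with rfl | hi
      · exact le_rfl
      · exact (h2 j hj).trans (h1 i hi)
    · intro i hi
      simp only [Finset.mem_sdiff, Finset.mem_insert, not_or] at hi
      exact hmax i (Finset.mem_sdiff.2 ⟨hi.1, hi.2.2⟩)

lemma block {ι : Type*} [DecidableEq ι] (a : ι → ℝ) (ha : ∀ i, 0 ≤ a i) (k : ℕ) (hk : 1 ≤ k)
    (C : ℝ) (hC : 0 ≤ C) (F : Finset ι → ℝ) (R : Finset ι)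
    (hF : ∀ A B, Disjoint A B → F (A ∪ B) ≤ F A + F B)
    (hb : ∀ A ⊆ R, A.card ≤ k → F A ≤ C * Real.sqrt (∑ i ∈ A, a i ^ 2)) :
    ∀ N : ℕ, ∀ U ⊆ R, U.card ≤ N → ∀ m : ℝ, 0 ≤ m → (∀ i ∈ U, a i ≤ m) →
      F U ≤ C * (Real.sqrt k * m + (∑ i ∈ U, a i) / Real.sqrt k) := by
  have hkr : (0 : ℝ) < k := by exact_mod_cast hk
  have hsk := Real.sqrt_pos.2 hkr
  have small : ∀ A ⊆ R, A.card ≤ k → ∀ m : ℝ, 0 ≤ m → (∀ i ∈ A, a i ≤ m) →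
      F A ≤ C * (Real.sqrt k * m) := by
    intro A hA hc m hm hle
    refine (hb A hA hc).trans (mul_le_mul_of_nonneg_left ?_ hC)
    rw [← Real.sqrt_sq hm, ← Real.sqrt_mul hkr.le]
    apply Real.sqrt_le_sqrt
    calc ∑ i ∈ A, a i ^ 2 ≤ ∑ i ∈ A, m ^ 2 :=
          Finset.sum_le_sum fun i hi => pow_le_pow_left₀ (ha i) (hle i hi) 2
      _ = A.card * m ^ 2 := by simp
      _ ≤ k * m ^ 2 := by gcongr
  intro N
  induction N with
  | zero =>
    intro U hU hc m hm hle
    refine (small U hU (by omega) m hm hle).trans (mul_le_mul_of_nonneg_left ?_ hC)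
    have : 0 ≤ (∑ i ∈ U, a i) / Real.sqrt k := div_nonneg (Finset.sum_nonneg fun i _ => ha i) hsk.le
    linarith
  | succ N ih =>
    intro U hU hc m hm hle
    by_cases hUk : U.card ≤ k
    · refine (small U hU hUk m hm hle).trans (mul_le_mul_of_nonneg_left ?_ hC)
      have : 0 ≤ (∑ i ∈ U, a i) / Real.sqrt k :=
        div_nonneg (Finset.sum_nonneg fun i _ => ha i) hsk.le
      linarith
    obtain ⟨A, hAU, hA, m', hm', h1, h2⟩ := topk a ha U k (by omega)
    have hI := ih (U \ A) (Finset.sdiff_subset.trans hU)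
      (by rw [Finset.card_sdiff_of_subset hAU]; omega) m' hm' h2
    have hs := small A (hAU.trans hU) hA.le m hm (fun i hi => hle i (hAU hi))
    have hu := hF A (U \ A) Finset.disjoint_sdiff
    rw [Finset.union_sdiff_of_subset hAU] at hu
    have hsum := Finset.sum_sdiff hAU (f := a)
    have hk2 : Real.sqrt k * m' ≤ (∑ i ∈ A, a i) / Real.sqrt k := by
      rw [le_div_iff₀ hsk]
      have : ∑ i ∈ A, m' ≤ ∑ i ∈ A, a i := Finset.sum_le_sum h1
      simp only [Finset.sum_const, hA, nsmul_eq_mul] at this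
      nlinarith [Real.mul_self_sqrt hkr.le]
    rw [← hsum, add_div]
    have := mul_le_mul_of_nonneg_left hk2 hC
    nlinarith

lemma lin_of_quad (b q : ℝ) (hq : 0 ≤ q) (h : ∀ t : ℝ, 0 < t → t ≤ 1 → 0 ≤ t * b + t ^ 2 / 2 * q) :
    0 ≤ b := by
  by_contra hb
  push Not at hb
  set t := min 1 (-b / (q + 1))
  have ht : 0 < t := lt_min one_pos (div_pos (by linarith) (by linarith))
  have h1 := h t ht (min_le_left _ _)
  have h2 : t * (q + 1) ≤ -b := by
    rw [← le_div_iff₀ (by linarith)]; exact min_le_right _ _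
  have h3 : 0 ≤ t * (b + t / 2 * q) := by nlinarith
  have := nonneg_of_mul_nonneg_right h3 ht
  nlinarith

lemma kkt {n r p : ℕ} (lam : ℝ) (hlam : 0 < lam)
    (X : Matrix (Fin n) (Fin p) ℝ) (B : Matrix (Fin p) (Fin r) ℝ)
    (W : Matrix (Fin n) (Fin r) ℝ) (Bhat : Matrix (Fin p) (Fin r) ℝ)
    (hmin : ∀ B' : Matrix (Fin p) (Fin r) ℝ,
      frobNorm (W - X * Bhat) ^ 2 / 2 + lam * norm21 Bhat ≤
        frobNorm (W - X * B') ^ 2 / 2 + lam * norm21 B')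
    (hcol : ∀ j : Fin p, 2 * l2norm ((Xᵀ * (W - X * B)) j) ≤ lam)
    (S T : Finset (Fin p)) (hS : ∀ i, i ∉ S → B i = 0) (hST : S ⊆ T) :
    ip (X * (Bhat - B)) (X * res (Bhat - B) T) ≤
      lam * (3 / 2 * ∑ i ∈ S, l2norm ((Bhat - B) i)
        - 1 / 2 * ∑ i ∈ T \ S, l2norm ((Bhat - B) i)) := by
  set D := Bhat - B with hD
  set a := fun i => l2norm (D i) with ha
  have hE : ip (W - X * B) (X * res D T) ≤ lam / 2 * ∑ i ∈ T, a i := by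
    rw [ip_adj]
    refine (ip_le_rows _ _).trans ?_
    have : ∑ i ∈ T, a i = ∑ i, l2norm (res D T i) := by simp [res_row, ha]
    rw [this, Finset.mul_sum]
    refine Finset.sum_le_sum fun i _ => mul_le_mul_of_nonneg_right ?_ (l2_nonneg _)
    linarith [hcol i]
  have hnorm : ∀ t : ℝ, 0 < t → t ≤ 1 → norm21 (Bhat - t • res D T) ≤
      norm21 Bhat + t * (∑ i ∈ S, a i - ∑ i ∈ T \ S, a i) := by
    intro t ht ht1
    have e1 : ∑ i ∈ S, a i = ∑ i, if i ∈ S then a i else 0 := by simp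
    have e2 : ∑ i ∈ T \ S, a i = ∑ i, if i ∈ T \ S then a i else 0 := by
      rw [Finset.sum_ite_mem, Finset.univ_inter]
    unfold norm21
    rw [e1, e2, ← Finset.sum_sub_distrib, Finset.mul_sum, ← Finset.sum_add_distrib]
    refine Finset.sum_le_sum fun i _ => ?_
    by_cases hi : i ∈ S
    · have hiT := hST hi
      have : (Bhat - t • res D T) i = Bhat i + (-t) • D i := by
        ext j; simp [res, hiT]; ring
      rw [this]
      refine (l2_add _ _).trans ?_
      rw [l2_smul, abs_neg, abs_of_pos ht]
      simp [hi, ha]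
    · have hBi : D i = Bhat i := by
        ext j; simp [hD, hS i hi]
      by_cases hiT : i ∈ T
      · have : (Bhat - t • res D T) i = (1 - t) • D i := by
          ext j; simp [res, hiT, hBi]; ring
        rw [this, l2_smul, abs_of_nonneg (by linarith)]
        simp only [hi, hiT, ha, Finset.mem_sdiff, hBi]
        simp
        linarith
      · have : (Bhat - t • res D T) i = Bhat i := by
          ext j; simp [res, hiT]
        rw [this]; simp [hi, hiT]
  have key : 0 ≤ ip (W - X * Bhat) (X * res D T) + lam * (∑ i ∈ S, a i - ∑ i ∈ T \ S, a i) := by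
    apply lin_of_quad _ (ip (X * res D T) (X * res D T)) (ip_self_nonneg _)
    intro t ht ht1
    have h1 := hmin (Bhat - t • res D T)
    have h2 := mul_le_mul_of_nonneg_left (hnorm t ht ht1) hlam.le
    have h3 : W - X * (Bhat - t • res D T) = (W - X * Bhat) + t • (X * res D T) := by
      rw [Matrix.mul_sub, Matrix.mul_smul]; abel
    rw [h3, frob_sq, frob_sq] at h1
    simp only [ip_add, add_ip, ip_smul, smul_ip] at h1
    rw [ip_comm (X * res D T) (W - X * Bhat)] at h1
    nlinarith
  have hsplit : W - X * Bhat = (W - X * B) - X * D := by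
    rw [hD, Matrix.mul_sub]; abel
  rw [hsplit, sub_ip] at key
  have hsum := Finset.sum_sdiff hST (f := a)
  rw [← hsum] at hE
  simp only [ha] at *
  nlinarith

end GrpLasso

set_option maxHeartbeats 1000000

/-- Group Lasso error bound (deterministic part). Under the sparse eigenvalue
condition SE(s_*, c_*, K) with s_* ≥ 2s and 6c_* ≤ √(s_*/s − 1), if `B̂` minimizes the group
Lasso objective and `2‖X_{*j}'(W − XB)‖ ≤ λ` for all j, then
`‖B̂ − B‖_F ≤ 3(1 + (4c_*)⁻¹)√s λ / κ₋²(s_*)`. -/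
theorem stmt2 {n r p : ℕ} (s sstar : ℕ) (cstar K lam : ℝ)
    (X : Matrix (Fin n) (Fin p) ℝ) (B : Matrix (Fin p) (Fin r) ℝ) (Z : Matrix (Fin n) (Fin r) ℝ)
    (W : Matrix (Fin n) (Fin r) ℝ) (hW : W = X * B + Z)
    (hs : 1 ≤ s) (hsupp : (rowSupport B).card ≤ s)
    (hlam : 0 < lam)
    (hsstar : 2 * s ≤ sstar) (hcstar : 0 < cstar)
    (hcs : 6 * cstar ≤ Real.sqrt ((sstar : ℝ) / (s : ℝ) - 1))
    (hK : 1 < K) (hK1 : K⁻¹ ≤ kappaMinus X sstar)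
    (hK2 : kappaMinus X sstar ≤ kappaPlus X sstar) (hK3 : kappaPlus X sstar ≤ K)
    (hSE : (kappaPlusSq X sstar - kappaMinusSq X (2 * sstar)) / kappaMinusSq X sstar < cstar)
    (Bhat : Matrix (Fin p) (Fin r) ℝ)
    (hmin : ∀ B' : Matrix (Fin p) (Fin r) ℝ,
      frobNorm (W - X * Bhat) ^ 2 / 2 + lam * norm21 Bhat ≤
        frobNorm (W - X * B') ^ 2 / 2 + lam * norm21 B')
    (hcol : ∀ j : Fin p, 2 * l2norm ((Xᵀ * (W - X * B)) j) ≤ lam) :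
    frobNorm (Bhat - B) ≤ 3 * (1 + (4 * cstar)⁻¹) * Real.sqrt s * lam / kappaMinusSq X sstar := by
  have hs0 : (0 : ℝ) < s := by exact_mod_cast hs
  have hκ : 0 < kappaMinusSq X sstar := by
    have : 0 < kappaMinus X sstar := lt_of_lt_of_le (inv_pos.2 (by linarith)) hK1
    exact Real.sqrt_pos.1 this
  have hp : sstar ≤ p := by
    by_contra hp
    have : kappaMinusSq X sstar = 0 := by
      unfold kappaMinusSq
      convert Real.sInf_empty
      ext t
      simp only [mem_ofPred_eq, mem_empty_iff_false, iff_false]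
      rintro ⟨B, hB, -⟩
      have := B.card_le_univ
      simp at this
      omega
    linarith
  set κ := kappaMinusSq X sstar with hκdef
  have hδ : kappaPlusSq X sstar - kappaMinusSq X (2 * sstar) ≤ cstar * κ := by
    rw [div_lt_iff₀ hκ] at hSE
    exact hSE.le
  set S := rowSupport B with hSdef
  have hS : ∀ i, i ∉ S → B i = 0 := by
    intro i hi
    simpa [hSdef, rowSupport] using hi
  set D := Bhat - B with hD
  set a := fun i => l2norm (D i) with ha
  have ha0 : ∀ i, 0 ≤ a i := fun i => GrpLasso.l2_nonneg _
  have hk1 : 1 ≤ sstar - s := by omega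
  set k := sstar - s with hk
  have hkr : (k : ℝ) = sstar - s := by rw [hk, Nat.cast_sub (by omega)]
  have hk0 : (0 : ℝ) < k := by exact_mod_cast hk1
  obtain ⟨A, hAS, hA, m, hm, hm1, hm2⟩ := GrpLasso.topk a ha0 Sᶜ k (by
    rw [Finset.card_compl, Fintype.card_fin]; omega)
  have hdisj : Disjoint S A := by
    rw [Finset.disjoint_left]
    intro i hi hiA
    exact (Finset.mem_compl.1 (hAS hiA)) hi
  set T := S ∪ A with hT
  have hTc : Tᶜ = Sᶜ \ A := by
    ext i; simp [hT]
  have hTcard : T.card ≤ sstar := by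
    have := Finset.card_union_le S A
    rw [← hT] at this
    omega
  have k1 := GrpLasso.kkt lam hlam X B W Bhat hmin hcol S T hS Finset.subset_union_left
  have k2 := GrpLasso.kkt lam hlam X B W Bhat hmin hcol S Finset.univ hS (Finset.subset_univ _)
  rw [← hD] at k1 k2
  rw [GrpLasso.res_univ, ← Finset.compl_eq_univ_sdiff] at k2
  change _ ≤ lam * (3 / 2 * ∑ i ∈ S, a i - 1 / 2 * ∑ i ∈ T \ S, a i) at k1
  change _ ≤ lam * (3 / 2 * ∑ i ∈ S, a i - 1 / 2 * ∑ i ∈ Sᶜ, a i) at k2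
  set P := ∑ i ∈ S, a i with hP
  set L := ∑ i ∈ Sᶜ, a i with hL
  have hTS : 0 ≤ ∑ i ∈ T \ S, a i := Finset.sum_nonneg fun i _ => ha0 i
  have hL0 : 0 ≤ L := Finset.sum_nonneg fun i _ => ha0 i
  have hcone : L ≤ 3 * P := by
    have h := (GrpLasso.ip_self_nonneg (X * D)).trans k2
    have := nonneg_of_mul_nonneg_right h hlam
    linarith
  set Q := Real.sqrt (∑ i ∈ T, a i ^ 2) with hQ
  have hQ0 : 0 ≤ Q := Real.sqrt_nonneg _
  have hQsq : Q ^ 2 = ∑ i ∈ T, a i ^ 2 := Real.sq_sqrt (Finset.sum_nonneg fun _ _ => sq_nonneg _)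
  have hPQ : P ≤ Real.sqrt s * Q := by
    refine (le_abs_self _).trans (abs_le_of_sq_le_sq ?_ (by positivity))
    rw [mul_pow, Real.sq_sqrt hs0.le, hQsq]
    calc P ^ 2 ≤ S.card * ∑ i ∈ S, a i ^ 2 := sq_sum_le_card_mul_sum_sq
      _ ≤ s * ∑ i ∈ T, a i ^ 2 := by
        gcongr
        exact Finset.subset_union_left
  -- tail
  have hLsplit : ∑ i ∈ Tᶜ, a i + ∑ i ∈ A, a i = L := by
    rw [hTc]; exact Finset.sum_sdiff hAS
  have hkm : k * m ≤ ∑ i ∈ A, a i := by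
    have : ∑ i ∈ A, m ≤ ∑ i ∈ A, a i := Finset.sum_le_sum hm1
    simpa [hA] using this
  have htail : ∑ i ∈ Tᶜ, a i ^ 2 ≤ L ^ 2 / (4 * k) := by
    have h1 : ∑ i ∈ Tᶜ, a i ^ 2 ≤ m * ∑ i ∈ Tᶜ, a i := by
      rw [Finset.mul_sum]
      refine Finset.sum_le_sum fun i hi => ?_
      rw [sq]
      exact mul_le_mul_of_nonneg_right (hm2 i (hTc ▸ hi)) (ha0 i)
    have h0 : 0 ≤ ∑ i ∈ Tᶜ, a i := Finset.sum_nonneg fun i _ => ha0 i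
    rw [le_div_iff₀ (by positivity)]
    have h2 := mul_le_mul_of_nonneg_right hkm h0
    rw [← hLsplit]
    nlinarith [sq_nonneg (∑ i ∈ Tᶜ, a i - ∑ i ∈ A, a i)]
  have hC0 : 0 ≤ cstar * κ := by positivity
  have hcr : |GrpLasso.ip (X * GrpLasso.res D T) (X * GrpLasso.res D Tᶜ)| ≤
      (cstar * κ * Q) * (Real.sqrt k * m + (∑ i ∈ Tᶜ, a i) / Real.sqrt k) := by
    refine GrpLasso.block a ha0 k hk1 (cstar * κ * Q) (by positivity)
      (fun A => |GrpLasso.ip (X * GrpLasso.res D T) (X * GrpLasso.res D A)|) Tᶜ ?_ ?_ _ Tᶜ subset_rfl le_rfl m hm ?_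
    · intro A B hAB
      simp only [GrpLasso.res_union D A B hAB, Matrix.mul_add, GrpLasso.ip_add]
      exact abs_add_le _ _
    · intro A' hA' hc
      have := GrpLasso.cross X sstar hp (cstar * κ) hC0 hδ D T A'
        (Finset.disjoint_left.2 fun i hi hi' => (Finset.mem_compl.1 (hA' hi')) hi) hTcard (by omega)
      rw [mul_assoc]
      exact this
    · intro i hi
      exact hm2 i (hTc ▸ hi)
  have hsk : 0 < Real.sqrt k := Real.sqrt_pos.2 hk0
  have hcr2 : Real.sqrt k * m + (∑ i ∈ Tᶜ, a i) / Real.sqrt k ≤ L / Real.sqrt k := by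
    rw [le_div_iff₀ hsk, add_mul, div_mul_cancel₀ _ hsk.ne']
    nlinarith [Real.mul_self_sqrt hk0.le]
  have hcs' : 6 * cstar * Real.sqrt s ≤ Real.sqrt k := by
    have : Real.sqrt k = Real.sqrt ((sstar : ℝ) / (s : ℝ) - 1) * Real.sqrt s := by
      rw [← Real.sqrt_mul' _ hs0.le, hkr]
      congr 1
      field_simp
    rw [this]
    exact mul_le_mul_of_nonneg_right hcs (Real.sqrt_nonneg _)
  have hLk : 2 * cstar * L ≤ Real.sqrt k * Q := by
    have h1 := mul_le_mul_of_nonneg_right hcs' hQ0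
    have h2 : L ≤ 3 * (Real.sqrt s * Q) := by linarith
    have h3 := mul_le_mul_of_nonneg_left h2 (show 0 ≤ 2 * cstar by positivity)
    linarith
  have hLk2 : cstar * (L / Real.sqrt k) ≤ Q / 2 := by
    rw [← mul_div_assoc, div_le_iff₀ hsk]
    linarith
  have hlow := GrpLasso.kminus_mat X sstar T hTcard (GrpLasso.res D T) (fun i hi => by simp [GrpLasso.res, hi])
  rw [GrpLasso.res_sq] at hlow
  change κ * ∑ i ∈ T, a i ^ 2 ≤ _ at hlow
  rw [← hQsq] at hlow
  have hdec : GrpLasso.ip (X * D) (X * GrpLasso.res D T) = GrpLasso.ip (X * GrpLasso.res D T) (X * GrpLasso.res D T)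
      + GrpLasso.ip (X * GrpLasso.res D T) (X * GrpLasso.res D Tᶜ) := by
    have : D = GrpLasso.res D T + GrpLasso.res D Tᶜ := by
      rw [← GrpLasso.res_union D T Tᶜ disjoint_compl_right, Finset.union_compl, GrpLasso.res_univ]
    conv_lhs => rw [GrpLasso.ip_comm]
    rw [← GrpLasso.ip_add, ← Matrix.mul_add, ← this]
  have hcr3 : -GrpLasso.ip (X * GrpLasso.res D T) (X * GrpLasso.res D Tᶜ) ≤ κ * Q * (Q / 2) := by
    refine (neg_le_abs _).trans (hcr.trans ?_)
    calc _ ≤ cstar * κ * Q * (L / Real.sqrt k) := mul_le_mul_of_nonneg_left hcr2 (by positivity)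
      _ = κ * Q * (cstar * (L / Real.sqrt k)) := by ring
      _ ≤ _ := mul_le_mul_of_nonneg_left hLk2 (by positivity)
  have hmain : κ * Q * Q ≤ 3 * lam * Real.sqrt s * Q := by
    have h1 := mul_le_mul_of_nonneg_left hPQ hlam.le
    have h2 := mul_nonneg hlam.le hTS
    rw [hdec] at k1
    linarith
  have hQfin : Q ≤ 3 * lam * Real.sqrt s / κ := by
    rw [le_div_iff₀ hκ]
    rcases hQ0.eq_or_lt with h | h
    · rw [← h]; simp; positivity
    · have := le_of_mul_le_mul_right hmain h
      linarith
  have htot : frobNorm D ≤ Q * (1 + (4 * cstar)⁻¹) := by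
    refine (le_abs_self _).trans (abs_le_of_sq_le_sq ?_ (by positivity))
    rw [GrpLasso.frob_sq, GrpLasso.ip_self_rows]
    change ∑ i, a i ^ 2 ≤ _
    rw [← Finset.sum_add_sum_compl T, ← hQsq]
    have h1 : L ^ 2 / (4 * k) ≤ (Q * (4 * cstar)⁻¹) ^ 2 := by
      rw [div_le_iff₀ (by positivity)]
      have h2 := pow_le_pow_left₀ (by positivity) hLk 2
      rw [mul_pow (Real.sqrt k), Real.sq_sqrt hk0.le] at h2
      field_simp
      nlinarith
    have h3 : 0 ≤ Q * (Q * (4 * cstar)⁻¹) := by positivity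
    nlinarith
  calc frobNorm D ≤ Q * (1 + (4 * cstar)⁻¹) := htot
    _ ≤ 3 * lam * Real.sqrt s / κ * (1 + (4 * cstar)⁻¹) :=
      mul_le_mul_of_nonneg_right hQfin (by positivity)
    _ = _ := by ring

end
end

section
/- (Group Lasso error bound, Gaussian noise.) Consider W = XB + Z with W ∈ ℝ^{n×r}, X ∈ ℝ^{n×p}, B ∈ ℝ^{p×r} having at most s nonzero rows (s ≥ 1), and Z having i.i.d. N(0,σ²) entries. Let B̂ minimize ‖W − XB‖_F²/2 + λ‖B‖_{2,1} over ℝ^{p×r}. Suppose Condition SE(s_*, c_*, K) holds with an absolute constant K > 1 and positive constants s_*, c_* satisfying s_* ≥ 2s and 6c_* ≤ √(s_*/s − 1). For any η ∈ (0,1), if λ ≥ 2σ max_j ‖X_{*j}‖ (√r + √(2 log(p/η))), then with probability at least 1 − η, ‖B̂ − B‖_F ≤ 3(1 + (4c_*)^{-1})√s λ / κ_-²(s_*). -/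
open MeasureTheory ProbabilityTheory Matrix Set
open scoped ENNReal NNReal

noncomputable section

lemma lintegral_pi_prod' {ι : Type*} [Fintype ι] {Ω : ι → Type*} [∀ i, MeasurableSpace (Ω i)]
    (μ : (i : ι) → Measure (Ω i)) [∀ i, IsProbabilityMeasure (μ i)]
    (f : (i : ι) → Ω i → ℝ≥0∞) (hf : ∀ i, Measurable (f i)) :
    ∫⁻ ω, ∏ i, f i (ω i) ∂(Measure.pi μ) = ∏ i, ∫⁻ x, f i x ∂(μ i) := by
  have h := lintegral_prod_eq_prod_lintegral_of_indepFun (μ := Measure.pi μ) Finset.univ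
    (fun i ω => f i (ω i)) (iIndepFun_pi (fun i => (hf i).aemeasurable))
    (fun i => (hf i).comp (measurable_pi_apply i))
  rw [h]
  refine Finset.prod_congr rfl fun i _ => ?_
  exact (measurePreserving_eval μ i).lintegral_comp (hf i)

lemma lintegral_exp_gauss (v : ℝ≥0) (t : ℝ) :
    ∫⁻ x, ENNReal.ofReal (Real.exp (t * x)) ∂(gaussianReal 0 v)
      = ENNReal.ofReal (Real.exp (v * t ^ 2 / 2)) := by
  rw [← ofReal_integral_eq_lintegral_ofReal (integrable_exp_mul_gaussianReal t)
    (ae_of_all _ fun x => (Real.exp_pos _).le)]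
  have := congrFun (mgf_fun_id_gaussianReal (μ := 0) (v := v)) t
  simp only [mgf] at this
  rw [this]; simp

lemma lintegral_exp_sq_gauss (b : ℝ) (hb : 1 < b) :
    ∫⁻ x, ENNReal.ofReal (Real.exp ((1 - (b ^ 2)⁻¹) / 2 * x ^ 2)) ∂(gaussianReal 0 1)
      = ENNReal.ofReal b := by
  have hb0 : 0 < b := by linarith
  have hc : 0 < (2 * b ^ 2)⁻¹ := by positivity
  rw [gaussianReal_of_var_ne_zero _ one_ne_zero,
    lintegral_withDensity_eq_lintegral_mul _ (measurable_gaussianPDF _ _) (by fun_prop)]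
  have : ∀ x : ℝ, (gaussianPDF 0 1 * fun x : ℝ =>
      ENNReal.ofReal (Real.exp ((1 - (b ^ 2)⁻¹) / 2 * x ^ 2))) x
      = ENNReal.ofReal ((Real.sqrt (2 * Real.pi))⁻¹ * Real.exp (-(2 * b ^ 2)⁻¹ * x ^ 2)) := by
    intro x
    simp only [Pi.mul_apply, gaussianPDF, gaussianPDFReal]
    rw [← ENNReal.ofReal_mul (by positivity), mul_assoc, ← Real.exp_add]
    congr 2
    · simp
    · congr 1
      simp
      field_simp
      ring
  simp_rw [this]
  rw [← ofReal_integral_eq_lintegral_ofReal ((integrable_exp_neg_mul_sq hc).const_mul _)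
    (ae_of_all _ fun x => by positivity)]
  rw [integral_const_mul, integral_gaussian]
  congr 1
  have : Real.pi / (2 * b ^ 2)⁻¹ = 2 * Real.pi * b ^ 2 := by field_simp
  rw [this, Real.sqrt_mul (x := 2 * Real.pi) (by positivity) (b ^ 2), Real.sqrt_sq hb0.le]
  have : Real.sqrt (2 * Real.pi) ≠ 0 := by positivity
  field_simp

instance isProb_gaussianMatrix (n r : ℕ) (v : ℝ≥0) : IsProbabilityMeasure (gaussianMatrix n r v) :=
  inferInstanceAs (IsProbabilityMeasure (Measure.pi (fun _ : Fin n =>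
    Measure.pi fun _ : Fin r => gaussianReal 0 v) : Measure (Fin n → Fin r → ℝ)))

lemma chi_mgf {n r : ℕ} (σ : ℝ) (hσ : 0 < σ) (x : Fin n → ℝ) (hx : 0 < l2norm x)
    (b : ℝ) (hb : 1 < b) :
    ∫⁻ Z : Matrix (Fin n) (Fin r) ℝ, ∏ k, ENNReal.ofReal (Real.exp
      ((1 - (b ^ 2)⁻¹) / 2 * (∑ i, x i * Z i k) ^ 2 / (σ * l2norm x) ^ 2))
      ∂(gaussianMatrix n r (Real.toNNReal (σ ^ 2))) = ENNReal.ofReal b ^ r := by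
  have hb0 : 0 < b := by linarith
  set u : ℝ := (1 - (b ^ 2)⁻¹) / 2 with hu
  have hu0 : 0 < u := by
    have : (b ^ 2)⁻¹ < 1 := inv_lt_one_of_one_lt₀ (by nlinarith)
    rw [hu]; linarith
  set τ := σ * l2norm x with hτ
  have hτ0 : 0 < τ := by positivity
  set c := Real.sqrt (2 * u) / τ with hc
  have hc2 : c ^ 2 * τ ^ 2 = 2 * u := by
    rw [hc, div_pow, Real.sq_sqrt (by positivity)]; field_simp
  have hτ2 : τ ^ 2 = σ ^ 2 * ∑ i, x i ^ 2 := by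
    rw [hτ, mul_pow, l2norm, Real.sq_sqrt (Finset.sum_nonneg fun i _ => sq_nonneg _)]
  have hv : ((Real.toNNReal (σ ^ 2) : ℝ≥0) : ℝ) = σ ^ 2 := Real.coe_toNNReal _ (sq_nonneg _)
  -- decoupling
  have h1 : ∀ y : ℝ, ENNReal.ofReal (Real.exp (u * y ^ 2 / τ ^ 2))
      = ∫⁻ h, ENNReal.ofReal (Real.exp (c * y * h)) ∂(gaussianReal 0 1) := by
    intro y
    rw [lintegral_exp_gauss]
    congr 2
    have : c ^ 2 = 2 * u / τ ^ 2 := by field_simp; linarith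
    simp only [NNReal.coe_one]
    rw [mul_pow c y, this]; ring
  have h2 : ∀ Z : Matrix (Fin n) (Fin r) ℝ, ∏ k, ENNReal.ofReal (Real.exp
      (u * (∑ i, x i * Z i k) ^ 2 / τ ^ 2)) =
      ∫⁻ h : Fin r → ℝ, ∏ k, ENNReal.ofReal (Real.exp (c * (∑ i, x i * Z i k) * h k))
        ∂(Measure.pi fun _ : Fin r => gaussianReal 0 1) := by
    intro Z
    rw [lintegral_pi_prod' (fun _ : Fin r => gaussianReal 0 1)
      (fun k h => ENNReal.ofReal (Real.exp (c * (∑ i, x i * Z i k) * h))) (by fun_prop)]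
    exact Finset.prod_congr rfl fun k _ => h1 _
  have hm : ∀ i k, Measurable fun Z : Matrix (Fin n) (Fin r) ℝ => Z i k := by
    intro i k
    exact (measurable_pi_apply k).comp (measurable_pi_apply (X := fun _ : Fin n => Fin r → ℝ) i)
  have hm' : ∀ i k, Measurable fun q : Matrix (Fin n) (Fin r) ℝ × (Fin r → ℝ) => q.1 i k :=
    fun i k => (hm i k).comp measurable_fst
  simp_rw [h2]
  rw [lintegral_lintegral_swap]
  · have h3 : ∀ h : Fin r → ℝ, ∫⁻ Z : Matrix (Fin n) (Fin r) ℝ,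
        ∏ k, ENNReal.ofReal (Real.exp (c * (∑ i, x i * Z i k) * h k))
          ∂(gaussianMatrix n r (Real.toNNReal (σ ^ 2)))
        = ∏ k, ENNReal.ofReal (Real.exp (u * h k ^ 2)) := by
      intro h
      have h4 : ∀ Z : Matrix (Fin n) (Fin r) ℝ,
          ∏ k, ENNReal.ofReal (Real.exp (c * (∑ i, x i * Z i k) * h k))
          = ∏ i, ∏ k, ENNReal.ofReal (Real.exp (c * x i * h k * Z i k)) := by
        intro Z
        rw [Finset.prod_comm]
        refine Finset.prod_congr rfl fun k _ => ?_
        rw [← ENNReal.ofReal_prod_of_nonneg (fun i _ => (Real.exp_pos _).le), ← Real.exp_sum]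
        congr 2
        rw [Finset.mul_sum, Finset.sum_mul]
        exact Finset.sum_congr rfl fun i _ => by ring
      simp_rw [h4]
      rw [gaussianMatrix]
      refine (lintegral_pi_prod' (fun _ : Fin n => Measure.pi fun _ : Fin r =>
        gaussianReal 0 (Real.toNNReal (σ ^ 2)))
        (fun i z => ∏ k, ENNReal.ofReal (Real.exp (c * x i * h k * z k))) (by fun_prop)).trans ?_
      have h5 : ∀ i : Fin n, ∫⁻ z : Fin r → ℝ, ∏ k, ENNReal.ofReal (Real.exp (c * x i * h k * z k))
          ∂(Measure.pi fun _ : Fin r => gaussianReal 0 (Real.toNNReal (σ ^ 2)))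
          = ∏ k, ENNReal.ofReal (Real.exp (σ ^ 2 * (c * x i * h k) ^ 2 / 2)) := by
        intro i
        rw [lintegral_pi_prod' (fun _ : Fin r => gaussianReal 0 (Real.toNNReal (σ ^ 2)))
          (fun k z => ENNReal.ofReal (Real.exp (c * x i * h k * z))) (by fun_prop)]
        refine Finset.prod_congr rfl fun k _ => ?_
        rw [lintegral_exp_gauss, hv]
      simp_rw [h5]
      rw [Finset.prod_comm]
      refine Finset.prod_congr rfl fun k _ => ?_
      rw [← ENNReal.ofReal_prod_of_nonneg (fun i _ => (Real.exp_pos _).le), ← Real.exp_sum]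
      congr 2
      have : ∀ i, σ ^ 2 * (c * x i * h k) ^ 2 / 2 = (c ^ 2 * h k ^ 2 / 2 * σ ^ 2) * x i ^ 2 := by
        intro i; ring
      simp_rw [this]
      rw [← Finset.mul_sum]
      have : c ^ 2 * h k ^ 2 / 2 * σ ^ 2 * ∑ i, x i ^ 2 = (c ^ 2 * τ ^ 2) * h k ^ 2 / 2 := by
        rw [hτ2]; ring
      rw [this, hc2]; ring
    simp_rw [h3]
    rw [lintegral_pi_prod' (fun _ : Fin r => gaussianReal 0 1)
      (fun k h => ENNReal.ofReal (Real.exp (u * h ^ 2))) (by fun_prop)]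
    simp_rw [hu, lintegral_exp_sq_gauss b hb]
    simp
  · refine Measurable.aemeasurable ?_
    unfold Function.uncurry
    fun_prop

lemma chi_tail {n r : ℕ} (σ : ℝ) (hσ : 0 < σ) (x : Fin n → ℝ) (hx : 0 < l2norm x)
    (t : ℝ) (ht : 0 < t) :
    (gaussianMatrix n r (Real.toNNReal (σ ^ 2)))
      {Z | σ * l2norm x * (Real.sqrt r + t) < l2norm (fun k => ∑ i, x i * Z i k)}
      ≤ ENNReal.ofReal (Real.exp (-(t ^ 2 / 2))) := by
  rcases Nat.eq_zero_or_pos r with hr | hr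
  · subst hr
    have : {Z : Matrix (Fin n) (Fin 0) ℝ | σ * l2norm x * (Real.sqrt (0 : ℕ) + t) <
        l2norm (fun k => ∑ i, x i * Z i k)} = ∅ := by
      ext Z
      simp only [Set.mem_ofPred_eq, Set.mem_empty_iff_false, iff_false, not_lt]
      simp [l2norm]
      have : 0 ≤ Real.sqrt (∑ i, x i ^ 2) := Real.sqrt_nonneg _
      positivity
    rw [this]; simp
  have hrR : (0 : ℝ) < r := by exact_mod_cast hr
  have hsr : 0 < Real.sqrt r := Real.sqrt_pos.2 hrR
  set b := 1 + t / Real.sqrt r with hbdef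
  have hb : 1 < b := by rw [hbdef]; have : 0 < t / Real.sqrt r := by positivity
                        linarith
  have hb0 : 0 < b := by linarith
  have hbt : Real.sqrt r * b = Real.sqrt r + t := by rw [hbdef]; field_simp
  have hrsq : Real.sqrt r ^ 2 = r := Real.sq_sqrt hrR.le
  have htb : t ^ 2 = r * (b - 1) ^ 2 := by
    have : t = Real.sqrt r * (b - 1) := by linarith
    rw [this, mul_pow, hrsq]
  have hτ0 : 0 < σ * l2norm x := by positivity
  have hu0 : 0 < (1 - (b ^ 2)⁻¹) / 2 := by
    have : (b ^ 2)⁻¹ < 1 := inv_lt_one_of_one_lt₀ (by nlinarith)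
    linarith
  have hm : ∀ i k, Measurable fun Z : Matrix (Fin n) (Fin r) ℝ => Z i k := by
    intro i k
    exact (measurable_pi_apply k).comp (measurable_pi_apply (X := fun _ : Fin n => Fin r → ℝ) i)
  have hmk := mul_meas_ge_le_lintegral (μ := gaussianMatrix n r (Real.toNNReal (σ ^ 2)))
    (f := fun Z => ∏ k, ENNReal.ofReal (Real.exp
      ((1 - (b ^ 2)⁻¹) / 2 * (∑ i, x i * Z i k) ^ 2 / (σ * l2norm x) ^ 2)))
    (by fun_prop) (ENNReal.ofReal (Real.exp ((1 - (b ^ 2)⁻¹) / 2 * (r * b ^ 2))))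
  rw [chi_mgf σ hσ x hx b hb] at hmk
  have hsub : {Z : Matrix (Fin n) (Fin r) ℝ | σ * l2norm x * (Real.sqrt r + t) <
      l2norm (fun k => ∑ i, x i * Z i k)} ⊆
      {Z | ENNReal.ofReal (Real.exp ((1 - (b ^ 2)⁻¹) / 2 * (r * b ^ 2))) ≤
        ∏ k, ENNReal.ofReal (Real.exp
      ((1 - (b ^ 2)⁻¹) / 2 * (∑ i, x i * Z i k) ^ 2 / (σ * l2norm x) ^ 2))} := by
    intro Z hZ
    simp only [Set.mem_ofPred_eq] at hZ ⊢
    rw [← ENNReal.ofReal_prod_of_nonneg (fun i _ => (Real.exp_pos _).le), ← Real.exp_sum]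
    refine ENNReal.ofReal_le_ofReal (Real.exp_le_exp.2 ?_)
    rw [← Finset.sum_div, ← Finset.mul_sum, mul_div_assoc]
    refine mul_le_mul_of_nonneg_left ?_ hu0.le
    rw [le_div_iff₀ (by positivity)]
    rw [← hbt] at hZ
    have h := pow_le_pow_left₀ (by positivity) hZ.le 2
    have h' : l2norm (fun k => ∑ i, x i * Z i k) ^ 2 = ∑ k, (∑ i, x i * Z i k) ^ 2 :=
      Real.sq_sqrt (Finset.sum_nonneg fun i _ => sq_nonneg _)
    rw [h'] at h
    calc (r : ℝ) * b ^ 2 * (σ * l2norm x) ^ 2 = (σ * l2norm x * (Real.sqrt r * b)) ^ 2 := by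
          rw [mul_pow (σ * l2norm x), mul_pow (Real.sqrt r), hrsq]; ring
      _ ≤ _ := h
  refine (measure_mono hsub).trans ?_
  set P := (gaussianMatrix n r (Real.toNNReal (σ ^ 2))) {Z | ENNReal.ofReal (Real.exp ((1 - (b ^ 2)⁻¹) / 2 * (r * b ^ 2))) ≤
        ∏ k, ENNReal.ofReal (Real.exp
      ((1 - (b ^ 2)⁻¹) / 2 * (∑ i, x i * Z i k) ^ 2 / (σ * l2norm x) ^ 2))}
  set E := Real.exp ((1 - (b ^ 2)⁻¹) / 2 * (r * b ^ 2)) with hE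
  have hEpos : 0 < E := Real.exp_pos _
  have hE' : ENNReal.ofReal E ≠ 0 := by simpa using hEpos
  have : P ≤ ENNReal.ofReal b ^ r / ENNReal.ofReal E := by
    rw [ENNReal.le_div_iff_mul_le (Or.inl hE') (Or.inl ENNReal.ofReal_ne_top), mul_comm]
    exact hmk
  refine this.trans ?_
  rw [← ENNReal.ofReal_pow hb0.le, ← ENNReal.ofReal_div_of_pos hEpos]
  refine ENNReal.ofReal_le_ofReal ?_
  rw [hE, div_le_iff₀ (Real.exp_pos _), ← Real.exp_add]
  have hbe : b ≤ Real.exp (b - 1) := by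
    have := Real.add_one_le_exp (b - 1); linarith
  calc b ^ r ≤ Real.exp (b - 1) ^ r := pow_le_pow_left₀ hb0.le hbe r
    _ = Real.exp (r * (b - 1)) := by rw [← Real.exp_nat_mul]
    _ ≤ _ := by
      refine Real.exp_le_exp.2 (le_of_eq ?_)
      rw [htb]; field_simp; ring

lemma l2norm_nonneg' {I : Type*} [Fintype I] (v : I → ℝ) : 0 ≤ l2norm v := Real.sqrt_nonneg _

lemma l2norm_sq' {I : Type*} [Fintype I] (v : I → ℝ) : l2norm v ^ 2 = ∑ i, v i ^ 2 :=
  Real.sq_sqrt (Finset.sum_nonneg fun i _ => sq_nonneg _)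

lemma l2norm_eq_norm' {I : Type*} [Fintype I] (v : I → ℝ) :
    l2norm v = ‖(WithLp.toLp 2 v : EuclideanSpace ℝ I)‖ := by
  rw [EuclideanSpace.norm_eq]; simp [l2norm]

lemma l2norm_add_le' {I : Type*} [Fintype I] (v w : I → ℝ) :
    l2norm (v + w) ≤ l2norm v + l2norm w := by
  simp only [l2norm_eq_norm', WithLp.toLp_add]; exact norm_add_le _ _

lemma l2norm_smul' {I : Type*} [Fintype I] (c : ℝ) (v : I → ℝ) :
    l2norm (c • v) = |c| * l2norm v := by
  simp only [l2norm_eq_norm', WithLp.toLp_smul, norm_smul, Real.norm_eq_abs]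

lemma sum_mul_le_l2norm {I : Type*} [Fintype I] (v w : I → ℝ) :
    ∑ i, v i * w i ≤ l2norm v * l2norm w := Real.sum_mul_le_sqrt_mul_sqrt _ _ _

lemma l2norm_ne_zero {I : Type*} [Fintype I] (v : I → ℝ) (hv : v ≠ 0) : 0 < l2norm v := by
  rw [l2norm_eq_norm', norm_pos_iff]
  simpa using hv

/-- row restriction -/
def res {I J : Type*} [DecidableEq I] (A : Finset I) (M : Matrix I J ℝ) : Matrix I J ℝ :=
  fun i k => if i ∈ A then M i k else 0

/-- Frobenius inner product -/
def ip {I J : Type*} [Fintype I] [Fintype J] (U V : Matrix I J ℝ) : ℝ := ∑ i, ∑ k, U i k * V i k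

section IP
variable {I J : Type*} [Fintype I] [Fintype J]

lemma ip_add_left (U V W : Matrix I J ℝ) : ip (U + V) W = ip U W + ip V W := by
  simp [ip, add_mul, Finset.sum_add_distrib]
lemma ip_sub_left (U V W : Matrix I J ℝ) : ip (U - V) W = ip U W - ip V W := by
  simp [ip, sub_mul, Finset.sum_sub_distrib]
lemma ip_comm (U V : Matrix I J ℝ) : ip U V = ip V U := by
  simp [ip, mul_comm]
lemma ip_add_right (U V W : Matrix I J ℝ) : ip W (U + V) = ip W U + ip W V := by
  rw [ip_comm, ip_add_left, ip_comm U, ip_comm V]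
lemma ip_smul_left (c : ℝ) (U V : Matrix I J ℝ) : ip (c • U) V = c * ip U V := by
  simp [ip, Finset.mul_sum, mul_assoc]
lemma ip_smul_right (c : ℝ) (U V : Matrix I J ℝ) : ip U (c • V) = c * ip U V := by
  rw [ip_comm, ip_smul_left, ip_comm]
lemma ip_self_nonneg (U : Matrix I J ℝ) : 0 ≤ ip U U :=
  Finset.sum_nonneg fun i _ => Finset.sum_nonneg fun k _ => mul_self_nonneg _
lemma frob_sq (U : Matrix I J ℝ) : frobNorm U ^ 2 = ip U U := by
  have h : 0 ≤ ∑ i, ∑ j, U i j ^ 2 :=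
    Finset.sum_nonneg fun i _ => Finset.sum_nonneg fun k _ => sq_nonneg (U i k)
  refine (Real.sq_sqrt h).trans ?_
  simp [ip, sq]
lemma ip_self_rows (U : Matrix I J ℝ) : ip U U = ∑ i, l2norm (U i) ^ 2 := by
  simp only [ip, l2norm_sq']; simp [sq]
lemma ip_self_cols (U : Matrix I J ℝ) : ip U U = ∑ k, l2norm (fun i => U i k) ^ 2 := by
  simp only [ip, l2norm_sq']; rw [Finset.sum_comm]; simp [sq]
lemma eq_zero_of_ip (U : Matrix I J ℝ) (h : ip U U = 0) : U = 0 := by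
  rw [ip_self_rows] at h
  have h1 := (Finset.sum_eq_zero_iff_of_nonneg (fun i _ => sq_nonneg (l2norm (U i)))).1 h
  ext i k
  have h2 := h1 i (Finset.mem_univ _)
  rw [l2norm_sq'] at h2
  have h3 := (Finset.sum_eq_zero_iff_of_nonneg (fun k _ => sq_nonneg (U i k))).1 h2
  simpa using h3 k (Finset.mem_univ _)

variable [DecidableEq I]
lemma ip_res_self (A : Finset I) (M : Matrix I J ℝ) :
    ip (res A M) (res A M) = ∑ i ∈ A, l2norm (M i) ^ 2 := by
  rw [ip_self_rows]
  have : ∀ i, l2norm (res A M i) ^ 2 = if i ∈ A then l2norm (M i) ^ 2 else 0 := by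
    intro i
    by_cases h : i ∈ A
    · have e : res A M i = M i := by ext k; simp [res, h]
      simp [h, e]
    · have e : res A M i = 0 := by ext k; simp [res, h]
      simp [h, e, l2norm]
  simp_rw [this]
  rw [Finset.sum_ite_mem, Finset.univ_inter]

lemma res_union (A T : Finset I) (h : Disjoint A T) (M : Matrix I J ℝ) :
    res (A ∪ T) M = res A M + res T M := by
  ext i k
  simp only [res, Finset.mem_union, Matrix.add_apply]
  by_cases h1 : i ∈ A
  · have : i ∉ T := Finset.disjoint_left.1 h h1
    simp [h1, this]
  · simp [h1]

lemma res_univ (M : Matrix I J ℝ) : res Finset.univ M = M := by ext i k; simp [res]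
lemma res_row_mem {A : Finset I} {i : I} (h : i ∈ A) (M : Matrix I J ℝ) : res A M i = M i := by
  ext k; simp [res, h]
lemma res_row_not {A : Finset I} {i : I} (h : i ∉ A) (M : Matrix I J ℝ) : res A M i = 0 := by
  ext k; simp [res, h]
end IP

section Kappa
variable {n p r : ℕ} (X : Matrix (Fin n) (Fin p) ℝ)

lemma mulVec_bound (v : Fin p → ℝ) :
    l2norm (X.mulVec v) ^ 2 ≤ (∑ i, l2norm (X i) ^ 2) * l2norm v ^ 2 := by
  rw [l2norm_sq', Finset.sum_mul]
  refine Finset.sum_le_sum fun i _ => ?_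
  rw [l2norm_sq' (X i), l2norm_sq' v]
  exact Finset.sum_mul_sq_le_sq_mul_sq Finset.univ (X i) v

lemma kappaMinus_le (k : ℕ) (C : Finset (Fin p)) (hC : C.card ≤ k) (v : Fin p → ℝ)
    (hv : ∀ i, i ∉ C → v i = 0) :
    kappaMinusSq X k * l2norm v ^ 2 ≤ l2norm (X.mulVec v) ^ 2 := by
  by_cases hv0 : v = 0
  · subst hv0; simp [l2norm]
  by_cases hk : k ≤ p
  · obtain ⟨C', hCC', hC'⟩ := Finset.exists_superset_card_eq hC (by simpa using hk)
    have hpos := l2norm_ne_zero v hv0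
    have : kappaMinusSq X k ≤ l2norm (X.mulVec ((l2norm v)⁻¹ • v)) ^ 2 := by
      refine csInf_le ⟨0, ?_⟩ ⟨C', hC', (l2norm v)⁻¹ • v, ?_, ?_, rfl⟩
      · rintro t ⟨_, _, _, _, _, rfl⟩; positivity
      · intro i hi
        simp [hv i (fun h => hi (hCC' h))]
      · rw [l2norm_smul', abs_of_pos (by positivity)]; field_simp
    rw [Matrix.mulVec_smul, l2norm_smul', abs_of_pos (by positivity), mul_pow, inv_pow] at this
    rw [← div_eq_inv_mul, le_div_iff₀ (by positivity)] at this
    exact this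
  · have : kappaMinusSq X k = 0 := by
      rw [kappaMinusSq]
      convert Real.sInf_empty
      ext t
      simp only [Set.mem_ofPred_eq, Set.mem_empty_iff_false, iff_false]
      rintro ⟨C', hC', _⟩
      have := Finset.card_le_univ C'
      simp at this
      omega
    rw [this]; simp; positivity

lemma le_kappaPlus (k : ℕ) (hk : k ≤ p) (C : Finset (Fin p)) (hC : C.card ≤ k) (v : Fin p → ℝ)
    (hv : ∀ i, i ∉ C → v i = 0) :
    l2norm (X.mulVec v) ^ 2 ≤ kappaPlusSq X k * l2norm v ^ 2 := by
  by_cases hv0 : v = 0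
  · subst hv0; simp [l2norm]
  obtain ⟨C', hCC', hC'⟩ := Finset.exists_superset_card_eq hC (by simpa using hk)
  have hpos := l2norm_ne_zero v hv0
  have : l2norm (X.mulVec ((l2norm v)⁻¹ • v)) ^ 2 ≤ kappaPlusSq X k := by
    refine le_csSup ⟨∑ i, l2norm (X i) ^ 2, ?_⟩ ⟨C', hC', (l2norm v)⁻¹ • v, ?_, ?_, rfl⟩
    · rintro t ⟨_, _, w, _, hw, rfl⟩
      have := mulVec_bound X w
      rw [hw] at this; simpa using this
    · intro i hi
      simp [hv i (fun h => hi (hCC' h))]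
    · rw [l2norm_smul', abs_of_pos (by positivity)]; field_simp
  rw [Matrix.mulVec_smul, l2norm_smul', abs_of_pos (by positivity), mul_pow, inv_pow] at this
  rw [← div_eq_inv_mul, div_le_iff₀ (by positivity)] at this
  exact this

lemma col_mul (M : Matrix (Fin p) (Fin r) ℝ) (k : Fin r) :
    (fun i => (X * M) i k) = X.mulVec (fun j => M j k) := by
  ext i; simp [Matrix.mul_apply, Matrix.mulVec, dotProduct]

lemma kappaMinus_mat (k : ℕ) (C : Finset (Fin p)) (hC : C.card ≤ k)
    (M : Matrix (Fin p) (Fin r) ℝ) (hM : ∀ i, i ∉ C → M i = 0) :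
    kappaMinusSq X k * ip M M ≤ ip (X * M) (X * M) := by
  rw [ip_self_cols, ip_self_cols (X * M), Finset.mul_sum]
  refine Finset.sum_le_sum fun c _ => ?_
  rw [col_mul]
  exact kappaMinus_le X k C hC _ (fun i hi => by simp [hM i hi])

lemma kappaPlus_mat (k : ℕ) (hk : k ≤ p) (C : Finset (Fin p)) (hC : C.card ≤ k)
    (M : Matrix (Fin p) (Fin r) ℝ) (hM : ∀ i, i ∉ C → M i = 0) :
    ip (X * M) (X * M) ≤ kappaPlusSq X k * ip M M := by
  rw [ip_self_cols, ip_self_cols M, Finset.mul_sum]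
  refine Finset.sum_le_sum fun c _ => ?_
  rw [col_mul]
  exact le_kappaPlus X k hk C hC _ (fun i hi => by simp [hM i hi])

lemma cross_bound (k : ℕ) (hk : k ≤ p) (A T : Finset (Fin p)) (hA : A.card ≤ k) (hT : T.card ≤ k)
    (hAT : Disjoint A T) (M : Matrix (Fin p) (Fin r) ℝ) :
    - ip (X * res A M) (X * res T M) ≤ (kappaPlusSq X k - kappaMinusSq X (2 * k)) *
      (Real.sqrt (∑ i ∈ A, l2norm (M i) ^ 2) * Real.sqrt (∑ i ∈ T, l2norm (M i) ^ 2)) := by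
  rw [← ip_res_self, ← ip_res_self]
  set U := res A M with hU
  set V := res T M with hV
  rcases (ip_self_nonneg U).eq_or_lt with h0 | hUp
  · have := eq_zero_of_ip U h0.symm
    rw [this]; simp [ip]
  rcases (ip_self_nonneg V).eq_or_lt with h0 | hVp
  · have := eq_zero_of_ip V h0.symm
    rw [this]; simp [ip]
  set x := Real.sqrt (ip V V) with hx
  set y := Real.sqrt (ip U U) with hy
  have hx0 : 0 < x := Real.sqrt_pos.2 hVp
  have hy0 : 0 < y := Real.sqrt_pos.2 hUp
  have hx2 : x ^ 2 = ip V V := Real.sq_sqrt hVp.le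
  have hy2 : y ^ 2 = ip U U := Real.sq_sqrt hUp.le
  have huv : ip U V = 0 := by
    refine Finset.sum_eq_zero fun i _ => Finset.sum_eq_zero fun c _ => ?_
    simp only [hU, hV, res]
    by_cases h1 : i ∈ A
    · have : i ∉ T := Finset.disjoint_left.1 hAT h1
      simp [this]
    · simp [h1]
  have k1 := kappaMinus_mat X (2 * k) (A ∪ T)
    ((Finset.card_union_le _ _).trans (by omega)) (x • U + y • V) (by
      intro i hi
      simp only [Finset.mem_union, not_or] at hi
      ext c
      simp [hU, hV, res, hi.1, hi.2])
  have k2 := kappaPlus_mat X k hk A hA U (fun i hi => res_row_not hi M)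
  have k3 := kappaPlus_mat X k hk T hT V (fun i hi => res_row_not hi M)
  have e1 : ip (x • U + y • V) (x • U + y • V) = x ^ 2 * ip U U + y ^ 2 * ip V V := by
    simp only [ip_add_left, ip_add_right, ip_smul_left, ip_smul_right, ip_comm V U, huv]; ring
  have e2 : ip (X * (x • U + y • V)) (X * (x • U + y • V)) =
      x ^ 2 * ip (X * U) (X * U) + 2 * x * y * ip (X * U) (X * V) + y ^ 2 * ip (X * V) (X * V) := by
    simp only [Matrix.mul_add, Matrix.mul_smul, ip_add_left, ip_add_right, ip_smul_left,
      ip_smul_right, ip_comm (X * V) (X * U)]; ring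
  rw [e1, e2, ← hx2, ← hy2] at k1
  rw [← hy2] at k2
  rw [← hx2] at k3
  have k2' := mul_le_mul_of_nonneg_left k2 (sq_nonneg x)
  have k3' := mul_le_mul_of_nonneg_left k3 (sq_nonneg y)
  have hxy : 0 < 2 * x * y := by positivity
  refine le_of_mul_le_mul_left ?_ hxy
  nlinarith [k1, k2', k3']

end Kappa

section Block
variable {I : Type*} [DecidableEq I]

lemma exists_top_exact (a : I → ℝ) (U : Finset I) (m : ℕ) (hm : m ≤ U.card) :
    ∃ T ⊆ U, T.card = m ∧ ∀ i ∈ T, ∀ j ∈ U \ T, a j ≤ a i := by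
  induction m with
  | zero => exact ⟨∅, by simp, by simp, by simp⟩
  | succ m ih =>
    obtain ⟨T, hTU, hTm, hT⟩ := ih (by omega)
    have hne : (U \ T).Nonempty := by
      rw [← Finset.card_pos, Finset.card_sdiff_of_subset hTU]; omega
    obtain ⟨q, hq, hmax⟩ := Finset.exists_max_image (U \ T) a hne
    have hq' := Finset.mem_sdiff.1 hq
    refine ⟨insert q T, ?_, ?_, ?_⟩
    · intro i hi
      rcases Finset.mem_insert.1 hi with h | h
      · rw [h]; exact hq'.1
      · exact hTU h
    · rw [Finset.card_insert_of_notMem hq'.2, hTm]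
    · intro i hi j hj
      have hj' : j ∈ U \ T := by
        simp only [Finset.mem_sdiff, Finset.mem_insert, not_or] at hj ⊢
        exact ⟨hj.1, hj.2.2⟩
      rcases Finset.mem_insert.1 hi with h | h
      · rw [h]; exact hmax j hj'
      · exact hT i h j hj'

lemma exists_top (a : I → ℝ) (ha : ∀ i, 0 ≤ a i) (U : Finset I) (m : ℕ) (hm : 1 ≤ m) :
    ∃ T ⊆ U, T.card ≤ m ∧ (U.Nonempty → T.Nonempty) ∧ ∃ M : ℝ, 0 ≤ M ∧
      (∀ j ∈ U \ T, a j ≤ M) ∧ m * M ≤ ∑ i ∈ T, a i := by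
  by_cases h : U.card ≤ m
  · exact ⟨U, subset_rfl, h, id, 0, le_rfl, by simp, by
      simpa using Finset.sum_nonneg fun i _ => ha i⟩
  · obtain ⟨T, hTU, hTm, hT⟩ := exists_top_exact a U m (by omega)
    have hne : T.Nonempty := by rw [← Finset.card_pos]; omega
    obtain ⟨q, hq, hmin⟩ := Finset.exists_min_image T a hne
    refine ⟨T, hTU, hTm.le, fun _ => hne, a q, ha q, hT q hq, ?_⟩
    rw [← hTm, ← nsmul_eq_mul]
    exact Finset.card_nsmul_le_sum _ _ _ hmin

lemma block_bound (a : I → ℝ) (ha : ∀ i, 0 ≤ a i) (m : ℕ) (hm : 1 ≤ m) (D : ℝ) (hD : 0 ≤ D)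
    (g : Finset I → ℝ) (U : Finset I)
    (hadd : ∀ T W, T ⊆ U → W ⊆ U → Disjoint T W → g (T ∪ W) ≤ g T + g W)
    (hg : ∀ T ⊆ U, T.card ≤ m → g T ≤ D * Real.sqrt (∑ i ∈ T, a i ^ 2))
    (M : ℝ) (hM : 0 ≤ M) (hUM : ∀ j ∈ U, a j ≤ M) :
    g U ≤ D * Real.sqrt m * (M + (∑ i ∈ U, a i) / m) := by
  have hmR : (0 : ℝ) < m := by exact_mod_cast hm
  induction hN : U.card using Nat.strong_induction_on generalizing U M with
  | _ N ih =>
    rcases U.eq_empty_or_nonempty with h | h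
    · subst h
      have := hg ∅ (by simp) (by simp)
      simp at this ⊢
      exact this.trans (by positivity)
    · obtain ⟨T, hTU, hTm, hTne, M', hM', hM'le, hM's⟩ := exists_top a ha U m hm
      have hsub : U \ T ⊆ U := Finset.sdiff_subset
      have hcard : (U \ T).card < N := by
        rw [← hN, Finset.card_sdiff_of_subset hTU]
        have := Finset.card_pos.2 (hTne h)
        have := Finset.card_le_card hTU
        omega
      have r1 := ih _ hcard (U \ T)
        (fun T' W hT' hW => hadd T' W (hT'.trans hsub) (hW.trans hsub))
        (fun T' hT' => hg T' (hT'.trans hsub)) M' hM' hM'le rfl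
      have r2 := hadd T (U \ T) hTU hsub Finset.disjoint_sdiff
      rw [Finset.union_sdiff_of_subset hTU] at r2
      have r3 := hg T hTU hTm
      have r4 : Real.sqrt (∑ i ∈ T, a i ^ 2) ≤ Real.sqrt m * M := by
        rw [← Real.sqrt_sq hM, ← Real.sqrt_mul hmR.le]
        refine Real.sqrt_le_sqrt ?_
        calc ∑ i ∈ T, a i ^ 2 ≤ ∑ i ∈ T, M ^ 2 :=
              Finset.sum_le_sum fun i hi => pow_le_pow_left₀ (ha i) (hUM i (hTU hi)) 2
          _ = T.card * M ^ 2 := by simp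
          _ ≤ m * M ^ 2 := by
              refine mul_le_mul_of_nonneg_right (by exact_mod_cast hTm) (sq_nonneg _)
      have r5 := mul_le_mul_of_nonneg_left r4 hD
      have r6 : M' ≤ (∑ i ∈ T, a i) / m := by rw [le_div_iff₀ hmR]; linarith
      have r7 : ∑ i ∈ U, a i = ∑ i ∈ U \ T, a i + ∑ i ∈ T, a i :=
        (Finset.sum_sdiff hTU).symm
      have r8 : 0 ≤ D * Real.sqrt m := by positivity
      have r9 := mul_le_mul_of_nonneg_left r6 r8
      rw [r7, add_div]
      nlinarith

end Block

lemma nonneg_of_lin (α β : ℝ) (h : ∀ t : ℝ, 0 < t → t ≤ 1 → 0 ≤ α + t * β) : 0 ≤ α := by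
  by_contra hα
  push Not at hα
  have hb : 0 < |β| + 1 := by positivity
  set t := min 1 (-α / (2 * (|β| + 1))) with ht
  have ht0 : 0 < t := lt_min one_pos (div_pos (by linarith) (by positivity))
  have h1 := h t ht0 (min_le_left _ _)
  have h2 : t ≤ -α / (2 * (|β| + 1)) := min_le_right _ _
  rw [le_div_iff₀ (by positivity)] at h2
  have := le_abs_self β
  nlinarith

lemma basic_ineq {n p r : ℕ} (X : Matrix (Fin n) (Fin p) ℝ) (B Bh : Matrix (Fin p) (Fin r) ℝ)
    (Z : Matrix (Fin n) (Fin r) ℝ) (lam : ℝ) (hlam : 0 ≤ lam) (S A : Finset (Fin p)) (hSA : S ⊆ A)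
    (hB : ∀ i, i ∉ S → B i = 0)
    (hZ : ∀ j, l2norm (fun k => ∑ i, X i j * Z i k) ≤ lam / 2)
    (hmin : ∀ B' : Matrix (Fin p) (Fin r) ℝ,
      frobNorm (X * B + Z - X * Bh) ^ 2 / 2 + lam * norm21 Bh ≤
        frobNorm (X * B + Z - X * B') ^ 2 / 2 + lam * norm21 B') :
    ip (X * (Bh - B)) (X * res A (Bh - B)) ≤
      3 / 2 * lam * ∑ i ∈ S, l2norm ((Bh - B) i) - lam / 2 * ∑ i ∈ A \ S, l2norm ((Bh - B) i) := by
  set Δ := Bh - B with hΔ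
  set c := ∑ i ∈ S, l2norm (Δ i) - ∑ i ∈ A \ S, l2norm (Δ i) with hc
  set R := X * B + Z - X * Bh with hR
  have hn : ∀ t : ℝ, 0 < t → t ≤ 1 → norm21 (Bh - t • res A Δ) ≤ norm21 Bh + t * c := by
    intro t ht0 ht1
    have hc' : c = ∑ i, ((if i ∈ S then l2norm (Δ i) else 0)
        - (if i ∈ A \ S then l2norm (Δ i) else 0)) := by
      rw [Finset.sum_sub_distrib, Finset.sum_ite_mem, Finset.sum_ite_mem, Finset.univ_inter,
        Finset.univ_inter]
    rw [hc', norm21, norm21, Finset.mul_sum, ← Finset.sum_add_distrib]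
    refine Finset.sum_le_sum fun i _ => ?_
    by_cases hS : i ∈ S
    · have e : (Bh - t • res A Δ) i = Bh i + (-t) • Δ i := by
        ext k; simp [res, hSA hS]; ring
      rw [e]
      refine (l2norm_add_le' _ _).trans ?_
      rw [l2norm_smul', abs_neg, abs_of_pos ht0]
      simp [hS]
    · by_cases hA : i ∈ A
      · have e0 : Δ i = Bh i := by
          have := hB i hS
          ext k; simp [hΔ, this]
        have e : (Bh - t • res A Δ) i = (1 - t) • Bh i := by
          ext k
          have := congrFun e0 k
          simp [res, hA, this]; ring
        rw [e, l2norm_smul', abs_of_nonneg (by linarith), e0]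
        simp [hS, hA]
        linarith
      · have e : (Bh - t • res A Δ) i = Bh i := by
          ext k; simp [res, hA]
        rw [e]; simp [hS, hA]
  have key : 0 ≤ ip R (X * res A Δ) + lam * c := by
    refine nonneg_of_lin _ (ip (X * res A Δ) (X * res A Δ) / 2) fun t ht0 ht1 => ?_
    have h1 := hmin (Bh - t • res A Δ)
    have e : X * B + Z - X * (Bh - t • res A Δ) = R + t • (X * res A Δ) := by
      rw [Matrix.mul_sub, Matrix.mul_smul, hR]; abel
    rw [e, frob_sq, frob_sq] at h1
    have e2 : ip (R + t • (X * res A Δ)) (R + t • (X * res A Δ)) = ip R R +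
        2 * t * ip R (X * res A Δ) + t ^ 2 * ip (X * res A Δ) (X * res A Δ) := by
      simp only [ip_add_left, ip_add_right, ip_smul_left, ip_smul_right, ip_comm (X * res A Δ) R]
      ring
    rw [e2] at h1
    have h2 := mul_le_mul_of_nonneg_left (hn t ht0 ht1) hlam
    refine le_of_mul_le_mul_left ?_ ht0
    nlinarith
  have eR : R = Z - X * Δ := by
    rw [hR, hΔ, Matrix.mul_sub]; abel
  rw [eR, ip_sub_left] at key
  have hzz : ip Z (X * res A Δ) ≤ lam / 2 * ∑ i ∈ A, l2norm (Δ i) := by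
    have e : ip Z (X * res A Δ) = ∑ j, ∑ k, (∑ i, X i j * Z i k) * res A Δ j k := by
      simp only [ip, Matrix.mul_apply, Finset.mul_sum, Finset.sum_mul]
      rw [Finset.sum_comm]
      rw [Finset.sum_comm (s := (Finset.univ : Finset (Fin p)))]
      refine Finset.sum_congr rfl fun k _ => ?_
      rw [Finset.sum_comm]
      refine Finset.sum_congr rfl fun j _ => Finset.sum_congr rfl fun i _ => ?_
      ring
    rw [e, Finset.mul_sum]
    have e2 : ∑ i ∈ A, lam / 2 * l2norm (Δ i) = ∑ i, if i ∈ A then lam / 2 * l2norm (Δ i) else 0 := by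
      rw [Finset.sum_ite_mem, Finset.univ_inter]
    rw [e2]
    refine Finset.sum_le_sum fun j _ => ?_
    by_cases hA : j ∈ A
    · simp only [hA, if_true]
      refine (sum_mul_le_l2norm (fun k => ∑ i, X i j * Z i k) (res A Δ j)).trans ?_
      rw [res_row_mem hA]
      exact mul_le_mul_of_nonneg_right (hZ j) (l2norm_nonneg' _)
    · simp [hA, res]
  have hs : ∑ i ∈ A, l2norm (Δ i) = ∑ i ∈ A \ S, l2norm (Δ i) + ∑ i ∈ S, l2norm (Δ i) :=
    (Finset.sum_sdiff hSA).symm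
  rw [hs] at hzz
  rw [hc] at key
  nlinarith

set_option maxHeartbeats 1600000 in
lemma det_bound {n p r : ℕ} (s sstar : ℕ) (cstar lam : ℝ) (X : Matrix (Fin n) (Fin p) ℝ)
    (B Bh : Matrix (Fin p) (Fin r) ℝ) (Z : Matrix (Fin n) (Fin r) ℝ)
    (hs : 1 ≤ s) (hsupp : (rowSupport B).card ≤ s)
    (hsstar : 2 * s ≤ sstar) (hcstar : 0 < cstar)
    (hcs : 6 * cstar ≤ Real.sqrt ((sstar : ℝ) / (s : ℝ) - 1))
    (hκ : 0 < kappaMinusSq X sstar) (hp : sstar ≤ p)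
    (hSE : (kappaPlusSq X sstar - kappaMinusSq X (2 * sstar)) / kappaMinusSq X sstar < cstar)
    (hlam : 0 < lam)
    (hZ : ∀ j, l2norm (fun k => ∑ i, X i j * Z i k) ≤ lam / 2)
    (hmin : ∀ B' : Matrix (Fin p) (Fin r) ℝ,
      frobNorm (X * B + Z - X * Bh) ^ 2 / 2 + lam * norm21 Bh ≤
        frobNorm (X * B + Z - X * B') ^ 2 / 2 + lam * norm21 B') :
    frobNorm (Bh - B) ≤
          3 * (1 + (4 * cstar)⁻¹) * Real.sqrt s * lam / kappaMinusSq X sstar := by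
  set κ := kappaMinusSq X sstar with hκd
  set S := rowSupport B with hS
  have hB : ∀ i, i ∉ S → B i = 0 := by
    intro i hi
    simpa [hS, rowSupport] using hi
  set Δ := Bh - B with hΔ
  set a : Fin p → ℝ := fun i => l2norm (Δ i) with ha
  have ha0 : ∀ i, 0 ≤ a i := fun i => l2norm_nonneg' _
  obtain ⟨m, rfl⟩ : ∃ m, sstar = s + m := ⟨sstar - s, by omega⟩
  have hm : 1 ≤ m := by omega
  have hmR : (0 : ℝ) < m := by exact_mod_cast hm
  have hsR : (0 : ℝ) < s := by exact_mod_cast hs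
  obtain ⟨T, hTU, hTm, -, M, hM0, hMle, hMs⟩ := exists_top a ha0 Sᶜ m hm
  have hST : Disjoint S T := Finset.disjoint_left.2 fun i hi hi' => by
    have := hTU hi'
    simp [hi] at this
  set A := S ∪ T with hA
  have hAc : A.card ≤ s + m := (Finset.card_union_le _ _).trans (by omega)
  have hSA : S ⊆ A := Finset.subset_union_left
  have hUeq : Sᶜ \ T = Aᶜ := by ext i; simp [hA]
  have b1 := basic_ineq X B Bh Z lam hlam.le S Finset.univ (Finset.subset_univ _) hB hZ hmin
  have b2 := basic_ineq X B Bh Z lam hlam.le S A hSA hB hZ hmin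
  rw [← hΔ, res_univ] at b1
  rw [← hΔ] at b2
  set LS := ∑ i ∈ S, l2norm (Δ i) with hLS
  set LT := ∑ i ∈ T, a i with hLT
  set LU := ∑ i ∈ Aᶜ, a i with hLU
  have hLT0 : 0 ≤ LT := Finset.sum_nonneg fun i _ => ha0 i
  have hLU0 : 0 ≤ LU := Finset.sum_nonneg fun i _ => ha0 i
  have eSc : ∑ i ∈ Finset.univ \ S, l2norm (Δ i) = LU + LT := by
    rw [← Finset.compl_eq_univ_sdiff, ← Finset.sum_sdiff hTU, hUeq]
  rw [eSc] at b1
  have cone : LT + LU ≤ 3 * LS := by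
    have h0 := ip_self_nonneg (X * Δ)
    have : 0 ≤ lam / 2 * (3 * LS - (LT + LU)) := by linarith
    have := nonneg_of_mul_nonneg_right this (by linarith)
    linarith
  set NA := Real.sqrt (∑ i ∈ A, l2norm (Δ i) ^ 2) with hNA
  have hNA0 : 0 ≤ NA := Real.sqrt_nonneg _
  have hNA2 : NA ^ 2 = ∑ i ∈ A, l2norm (Δ i) ^ 2 :=
    Real.sq_sqrt (Finset.sum_nonneg fun i _ => sq_nonneg _)
  have hLSle : LS ≤ Real.sqrt s * NA := by
    rw [hNA, ← Real.sqrt_mul hsR.le]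
    refine Real.le_sqrt_of_sq_le ?_
    refine (sq_sum_le_card_mul_sum_sq).trans ?_
    refine mul_le_mul (by exact_mod_cast hsupp) ?_ (Finset.sum_nonneg fun i _ => sq_nonneg _) hsR.le
    exact Finset.sum_le_sum_of_subset_of_nonneg hSA fun i _ _ => sq_nonneg _
  have hδ : kappaPlusSq X (s + m) - kappaMinusSq X (2 * (s + m)) ≤ cstar * κ := by
    rw [div_lt_iff₀ hκ] at hSE; exact hSE.le
  have hDisj : ∀ T', T' ⊆ Aᶜ → Disjoint A T' := fun T' h =>
    Finset.disjoint_left.2 fun i hi hi' => by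
      have := h hi'
      simp [hi] at this
  have blk := block_bound a ha0 m hm (cstar * κ * NA) (by positivity)
    (fun W => - ip (X * res A Δ) (X * res W Δ)) Aᶜ
    (by
      intro T' W _ _ hd
      rw [res_union _ _ hd, Matrix.mul_add, ip_add_right]; linarith)
    (by
      intro T' hT' hc
      refine (cross_bound X (s + m) hp A T' hAc (by omega) (hDisj T' hT') Δ).trans ?_
      rw [mul_assoc (cstar * κ)]
      exact mul_le_mul_of_nonneg_right hδ (by positivity))
    M hM0 (by rw [← hUeq]; exact hMle)
  rw [← hLU] at blk
  set sm := Real.sqrt m with hsm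
  set ss := Real.sqrt s with hss
  have hsm0 : 0 < sm := Real.sqrt_pos.2 hmR
  have hss0 : 0 < ss := Real.sqrt_pos.2 hsR
  have hsm2 : sm ^ 2 = m := Real.sq_sqrt hmR.le
  have hss2 : ss ^ 2 = s := Real.sq_sqrt hsR.le
  have hratio : 6 * cstar * ss ≤ sm := by
    have : ((s + m : ℕ) : ℝ) / s - 1 = m / s := by push_cast; field_simp; ring
    rw [this, Real.sqrt_div hmR.le, le_div_iff₀ hss0] at hcs
    exact hcs
  have hML : M ≤ LT / m := by rw [le_div_iff₀ hmR]; linarith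
  have hsum : LT + LU ≤ 3 * ss * NA := by linarith
  -- cross term
  have cross : - ip (X * res A Δ) (X * res Aᶜ Δ) ≤ κ * NA ^ 2 / 2 := by
    refine blk.trans ?_
    have h1 : M + LU / m ≤ 3 * ss * NA / sm ^ 2 := by
      rw [hsm2, le_div_iff₀ hmR, add_mul, div_mul_cancel₀ _ hmR.ne']; linarith
    calc cstar * κ * NA * sm * (M + LU / m) ≤ cstar * κ * NA * sm * (3 * ss * NA / sm ^ 2) :=
          mul_le_mul_of_nonneg_left h1 (by positivity)
      _ = κ * NA ^ 2 / 2 * (6 * cstar * ss / sm) := by field_simp; ring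
      _ ≤ κ * NA ^ 2 / 2 * 1 := by
          refine mul_le_mul_of_nonneg_left ?_ (by positivity)
          rw [div_le_one hsm0]; exact hratio
      _ = _ := by ring
  have low := kappaMinus_mat X (s + m) A hAc (res A Δ) (fun i hi => res_row_not hi Δ)
  rw [ip_res_self, ← hNA2, ← hκd] at low
  have dec : ip (X * Δ) (X * res A Δ) = ip (X * res A Δ) (X * res A Δ) +
      ip (X * res A Δ) (X * res Aᶜ Δ) := by
    conv_lhs => rw [← res_univ Δ, ← Finset.union_compl A, res_union _ _ disjoint_compl_right]
    rw [← res_union A Aᶜ disjoint_compl_right, Finset.union_compl, res_univ]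
    rw [← ip_add_right, ← Matrix.mul_add, ← res_union A Aᶜ disjoint_compl_right,
      Finset.union_compl, res_univ, ip_comm]
  have hAS0 : 0 ≤ lam / 2 * ∑ i ∈ A \ S, l2norm (Δ i) :=
    mul_nonneg (by linarith) (Finset.sum_nonneg fun i _ => ha0 i)
  have hq : κ * NA ^ 2 / 2 ≤ 3 / 2 * lam * (ss * NA) := by
    have := mul_le_mul_of_nonneg_left hLSle (show 0 ≤ 3 / 2 * lam by linarith)
    linarith
  have hNAle : NA ≤ 3 * ss * lam / κ := by
    rw [le_div_iff₀ hκ]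
    rcases hNA0.eq_or_lt with h | h
    · rw [← h]; simp; positivity
    · refine le_of_mul_le_mul_left ?_ h
      nlinarith
  -- tail
  set NU := Real.sqrt (∑ i ∈ Aᶜ, a i ^ 2) with hNU
  have hNUle : NU ≤ (4 * cstar)⁻¹ * NA := by
    refine Real.sqrt_le_iff.2 ⟨by positivity, ?_⟩
    have h1 : ∑ i ∈ Aᶜ, a i ^ 2 ≤ M * LU := by
      rw [hLU, Finset.mul_sum]
      refine Finset.sum_le_sum fun i hi => ?_
      rw [sq]
      exact mul_le_mul_of_nonneg_right (hMle i (by rw [hUeq]; exact hi)) (ha0 i)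
    have h2 : M * LU ≤ LT / m * LU := mul_le_mul_of_nonneg_right hML hLU0
    have h3 : LT * LU ≤ (3 * ss * NA) ^ 2 / 4 := by
      have := pow_le_pow_left₀ (by positivity) hsum 2
      nlinarith [sq_nonneg (LT - LU)]
    have h4 : (3 * ss * NA) ^ 2 / 4 / m ≤ ((4 * cstar)⁻¹ * NA) ^ 2 := by
      rw [div_le_iff₀ hmR, ← hsm2]
      have : 3 * ss * NA / 2 ≤ (4 * cstar)⁻¹ * NA * sm := by
        rw [inv_mul_eq_div, div_mul_eq_mul_div, le_div_iff₀ (by positivity)]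
        nlinarith [mul_le_mul_of_nonneg_left hratio hNA0]
      have := pow_le_pow_left₀ (by positivity) this 2
      nlinarith
    calc _ ≤ LT / m * LU := h1.trans h2
      _ = LT * LU / m := by ring
      _ ≤ (3 * ss * NA) ^ 2 / 4 / m := div_le_div_of_nonneg_right h3 hmR.le
      _ ≤ _ := h4
  have hNU0 : 0 ≤ NU := Real.sqrt_nonneg _
  have hNU2 : NU ^ 2 = ∑ i ∈ Aᶜ, a i ^ 2 :=
    Real.sq_sqrt (Finset.sum_nonneg fun i _ => sq_nonneg _)
  have hfrob : frobNorm Δ ≤ NA + NU := by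
    refine abs_le_of_sq_le_sq' ?_ (by positivity) |>.2
    rw [frob_sq, ip_self_rows, ← Finset.sum_add_sum_compl A, ← hNA2]
    have : ∑ i ∈ Aᶜ, l2norm (Δ i) ^ 2 = NU ^ 2 := hNU2.symm
    rw [this]
    nlinarith
  calc frobNorm Δ ≤ NA + NU := hfrob
    _ ≤ (1 + (4 * cstar)⁻¹) * NA := by linarith
    _ ≤ (1 + (4 * cstar)⁻¹) * (3 * ss * lam / κ) :=
        mul_le_mul_of_nonneg_left hNAle (by positivity)
    _ = _ := by ring

/-- Group Lasso error bound with Gaussian noise. The noise matrix Z is random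
with i.i.d. N(0,σ²) entries; `Bhat` is any pointwise minimizer of the group Lasso objective.
If λ ≥ 2σ max_j ‖X_{*j}‖ (√r + √(2 log(p/η))), then with probability at least 1 − η the
estimation error bound holds. -/
theorem stmt3 {n r p : ℕ} (s sstar : ℕ) (cstar K lam σ η : ℝ)
    (X : Matrix (Fin n) (Fin p) ℝ) (B : Matrix (Fin p) (Fin r) ℝ)
    (hσ : 0 < σ) (hη : η ∈ Set.Ioo (0 : ℝ) 1)
    (hs : 1 ≤ s) (hsupp : (rowSupport B).card ≤ s)
    (hsstar : 2 * s ≤ sstar) (hcstar : 0 < cstar)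
    (hcs : 6 * cstar ≤ Real.sqrt ((sstar : ℝ) / (s : ℝ) - 1))
    (hK : 1 < K) (hK1 : K⁻¹ ≤ kappaMinus X sstar)
    (hK2 : kappaMinus X sstar ≤ kappaPlus X sstar) (hK3 : kappaPlus X sstar ≤ K)
    (hSE : (kappaPlusSq X sstar - kappaMinusSq X (2 * sstar)) / kappaMinusSq X sstar < cstar)
    (hlam : ∀ j : Fin p,
      2 * σ * l2norm (Xᵀ j) * (Real.sqrt r + Real.sqrt (2 * Real.log ((p : ℝ) / η))) ≤ lam)
    (Bhat : Matrix (Fin n) (Fin r) ℝ → Matrix (Fin p) (Fin r) ℝ)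
    (hmin : ∀ Z : Matrix (Fin n) (Fin r) ℝ, ∀ B' : Matrix (Fin p) (Fin r) ℝ,
      frobNorm (X * B + Z - X * Bhat Z) ^ 2 / 2 + lam * norm21 (Bhat Z) ≤
        frobNorm (X * B + Z - X * B') ^ 2 / 2 + lam * norm21 B') :
    ENNReal.ofReal (1 - η) ≤
      gaussianMatrix n r (Real.toNNReal (σ ^ 2))
        {Z | frobNorm (Bhat Z - B) ≤
          3 * (1 + (4 * cstar)⁻¹) * Real.sqrt s * lam / kappaMinusSq X sstar} := by
  have hκ : 0 < kappaMinusSq X sstar := by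
    have h1 : 0 < kappaMinus X sstar := lt_of_lt_of_le (inv_pos.2 (by linarith)) hK1
    exact Real.sqrt_pos.1 h1
  have hp : sstar ≤ p := by
    by_contra hlt
    have : kappaMinusSq X sstar = 0 := by
      rw [kappaMinusSq]
      convert Real.sInf_empty
      ext t
      simp only [Set.mem_ofPred_eq, Set.mem_empty_iff_false, iff_false]
      rintro ⟨C', hC', _⟩
      have := Finset.card_le_univ C'
      simp at this
      omega
    linarith
  have hp0 : 0 < p := by omega
  have hpR : (1 : ℝ) ≤ p := by exact_mod_cast hp0
  obtain ⟨hη0, hη1⟩ := hη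
  have hX : ∀ j : Fin p, 0 < l2norm (Xᵀ j) := by
    intro j
    have h := kappaMinus_le X sstar {j} (by simp; omega) (Pi.single j 1) (by
      intro i hi
      simp at hi
      simp [hi])
    have e1 : l2norm (Pi.single j (1 : ℝ) : Fin p → ℝ) ^ 2 = 1 := by
      rw [l2norm_sq', Finset.sum_eq_single j]
      · simp
      · intro b _ hb; simp [hb]
      · simp
    have e2 : X.mulVec (Pi.single j 1) = Xᵀ j := by
      ext i; simp
    rw [e1, e2, mul_one] at h
    have h0 := l2norm_nonneg' (Xᵀ j)
    rcases h0.eq_or_lt with h' | h'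
    · rw [← h'] at h; norm_num at h; linarith
    · exact h'
  have hlog : 0 < Real.log ((p : ℝ) / η) := Real.log_pos (by rw [lt_div_iff₀ hη0]; linarith)
  set t := Real.sqrt (2 * Real.log ((p : ℝ) / η)) with ht
  have ht0 : 0 < t := Real.sqrt_pos.2 (by linarith)
  have ht2 : t ^ 2 = 2 * Real.log ((p : ℝ) / η) := Real.sq_sqrt (by linarith)
  have hlam0 : 0 < lam := by
    refine lt_of_lt_of_le ?_ (hlam ⟨0, hp0⟩)
    have := hX ⟨0, hp0⟩
    have := Real.sqrt_nonneg (r : ℝ)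
    positivity
  set μ := gaussianMatrix n r (Real.toNNReal (σ ^ 2)) with hμ
  set bad : Fin p → Set (Matrix (Fin n) (Fin r) ℝ) := fun j =>
    {Z | σ * l2norm (Xᵀ j) * (Real.sqrt r + t) < l2norm (fun k => ∑ i, Xᵀ j i * Z i k)} with hbad
  have hbadj : ∀ j, μ (bad j) ≤ ENNReal.ofReal (η / p) := by
    intro j
    refine (chi_tail σ hσ (Xᵀ j) (hX j) t ht0).trans (ENNReal.ofReal_le_ofReal (le_of_eq ?_))
    rw [ht2, mul_div_cancel_left₀ _ two_ne_zero, Real.exp_neg,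
      Real.exp_log (by positivity), inv_div]
  have hunion : μ (⋃ j, bad j) ≤ ENNReal.ofReal η := by
    refine (measure_iUnion_fintype_le μ bad).trans ?_
    refine (Finset.sum_le_sum fun j _ => hbadj j).trans (le_of_eq ?_)
    rw [← ENNReal.ofReal_sum_of_nonneg (fun _ _ => by positivity)]
    congr 1
    simp
    field_simp
  have hm : ∀ i k, Measurable fun Z : Matrix (Fin n) (Fin r) ℝ => Z i k := by
    intro i k
    exact (measurable_pi_apply k).comp (measurable_pi_apply (X := fun _ : Fin n => Fin r → ℝ) i)
  have hmeas : MeasurableSet (⋃ j, bad j) := by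
    refine MeasurableSet.iUnion fun j => ?_
    refine measurableSet_lt measurable_const ?_
    unfold l2norm
    fun_prop
  have hcompl : ENNReal.ofReal (1 - η) ≤ μ (⋃ j, bad j)ᶜ := by
    rw [prob_compl_eq_one_sub hmeas, ENNReal.ofReal_sub _ hη0.le, ENNReal.ofReal_one]
    exact tsub_le_tsub_left hunion 1
  refine hcompl.trans (measure_mono ?_)
  intro Z hZ
  simp only [hbad, Set.mem_compl_iff, Set.mem_iUnion, not_exists, Set.mem_ofPred_eq, not_lt] at hZ
  refine det_bound s sstar cstar lam X B (Bhat Z) Z hs hsupp hsstar hcstar hcs hκ hp hSE hlam0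
    (fun j => ?_) (hmin Z)
  have h1 := hZ j
  have h2 := hlam j
  simp only [Matrix.transpose_apply] at h1
  refine h1.trans ?_
  linarith

end
end
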